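/- (i) For all ρ sufficiently close to 0: ρ·(E[X])² < a_ρ^{(K)} < b_ρ^{(K)} < a_ρ^{(K−1)} < b_ρ^{(K−1)} < ⋯ < a_ρ^{(1)} < b_ρ^{(1)} < E[X²]. (ii) For every j∈{1,…,K}: lim_{ρ→0⁺} a_ρ^{(j)} = E[X²·1{|X|>v_j}] and lim_{ρ→0⁺} b_ρ^{(j)} = E[X²·1{|X|≥v_j}]. (iii) For every q∈(ρ(E[X])², E[X²]) there exists a unique r*_ρ(q)∈(0,+∞) such that r*_ρ(q)·q/2 − (1/α(ρ))·ψ_ρ((α(ρ)/ρ)·r*_ρ(q)) = sup_{r≥0}{ r·q/2 − (1/α(ρ))·ψ_ρ((α(ρ)/ρ)·r) }. (iv) For every j∈{1,…,K} and every q∈[a_ρ^{(j)}, b_ρ^{(j)}]: 2(1−|ln ρ|^{-1/4})/(γv_j²) ≤ r*_ρ(q) ≤ 2(1+|ln ρ|^{-1/4})/(γv_j²), with r*_ρ(a_ρ^{(j)}) = 2(1−|ln ρ|^{-1/4})/(γv_j²) and r*_ρ(b_ρ^{(j)}) = 2(1+|ln ρ|^{-1/4})/(γv_j²). -/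

import Mathlib

open MeasureTheory ProbabilityTheory Real

noncomputable section

namespace DiscretePrior

/-- Standard Gaussian measure on ℝ. -/
def stdG : Measure ℝ := gaussianReal 0 1

/-- The sparse prior (1−ρ)δ₀ + ρ P₀. -/
def sparsePrior (ρ : ℝ) (P0 : Measure ℝ) : Measure ℝ :=
  ENNReal.ofReal (1 - ρ) • Measure.dirac 0 + ENNReal.ofReal ρ • P0

def meanP (P : Measure ℝ) : ℝ := ∫ x, x ∂P
def secondMoment (P : Measure ℝ) : ℝ := ∫ x, x ^ 2 ∂P

/-- E[X² 1(|X| > v)]. -/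
def truncSMgt (P : Measure ℝ) (v : ℝ) : ℝ := ∫ x, if v < |x| then x ^ 2 else 0 ∂P

/-- E[X² 1(|X| ≥ v)]. -/
def truncSMge (P : Measure ℝ) (v : ℝ) : ℝ := ∫ x, if v ≤ |x| then x ^ 2 else 0 ∂P

/-- ψ_ρ(r) = E[ln ∫ exp(r X* x + √r Z x − r x²/2) dP_{0,ρ}(x)]. -/
def psiD (P0 : Measure ℝ) (ρ r : ℝ) : ℝ :=
  ∫ xs, ∫ z,
    Real.log (∫ x, Real.exp (r * xs * x + Real.sqrt r * z * x - r * x ^ 2 / 2)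
      ∂(sparsePrior ρ P0)) ∂stdG ∂(sparsePrior ρ P0)

/-- g_ρ(r) = (2/ρ) ψ_ρ'((α(ρ)/ρ) r) with α(ρ) = γρ|ln ρ|. -/
def gD (P0 : Measure ℝ) (γ ρ r : ℝ) : ℝ :=
  (2 / ρ) * deriv (psiD P0 ρ) (γ * |Real.log ρ| * r)

/-- a_ρ^{(j)}. -/
def aD (P0 : Measure ℝ) (γ ρ vj : ℝ) : ℝ :=
  gD P0 γ ρ (2 * (1 - |Real.log ρ| ^ (-(1 : ℝ) / 4)) / (γ * vj ^ 2))

/-- b_ρ^{(j)}. -/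
def bD (P0 : Measure ℝ) (γ ρ vj : ℝ) : ℝ :=
  gD P0 γ ρ (2 * (1 + |Real.log ρ| ^ (-(1 : ℝ) / 4)) / (γ * vj ^ 2))

/-- The function whose supremum over r ≥ 0 is taken. -/
def fD (P0 : Measure ℝ) (γ ρ q r : ℝ) : ℝ :=
  r * q / 2 - psiD P0 ρ (γ * |Real.log ρ| * r) / (γ * ρ * |Real.log ρ|)

/-! By Gaussian integration by parts, `2 ψ_ρ'(s)` is the overlap `E[X* E[X* | Y]]` of the channel
`Y = √s X* + Z`. It is strictly increasing in `s`, so the objective is strictly concave and `r` is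
its maximizer exactly when the rescaled overlap at `r` equals `q`. The overlap is also the maximum
of `E[2 X* f(Y) - f(Y)²]` over estimators `f`. At signal-to-noise ratio `γ |ln ρ| r` an atom `x` of
`P₀` can be told from the pure noise of the `1 - ρ` majority precisely when `γ r x² > 2`: testing
the gated estimator bounds the limiting overlap below by the second moment of the detectable atoms,
and the posterior mean being negligible on the other atoms bounds it above. The perturbation
`|ln ρ|^{-1/4}` vanishes, but slower than the Gaussian fluctuations of relative order
`|ln ρ|^{-1/2}`, so the thresholds sit cleanly on either side of the atom `v_j`. -/

instance : IsProbabilityMeasure stdG := inferInstanceAs (IsProbabilityMeasure (gaussianReal 0 1))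

section GaussianMeasure

lemma integral_stdG (f : ℝ → ℝ) : ∫ z, f z ∂stdG = ∫ z, gaussianPDFReal 0 1 z * f z :=
  integral_gaussianReal_eq_integral_smul one_ne_zero

lemma integrable_stdG_iff {f : ℝ → ℝ} :
    Integrable f stdG ↔ Integrable (fun z => gaussianPDFReal 0 1 z * f z) := by
  rw [stdG, gaussianReal_of_var_ne_zero _ one_ne_zero,
    integrable_withDensity_iff_integrable_smul' (measurable_gaussianPDF _ _)
      (Filter.Eventually.of_forall fun _ => gaussianPDF_lt_top)]
  simp only [toReal_gaussianPDF, smul_eq_mul]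

lemma integrable_exp_mul_abs_stdG (c : ℝ) : Integrable (fun z => exp (c * |z|)) stdG :=
  integrable_exp_mul_abs (integrable_exp_mul_gaussianReal c) (integrable_exp_mul_gaussianReal (-c))

lemma integral_stdG_comp_add (f : ℝ → ℝ) (c : ℝ) :
    ∫ z, f (z + c) ∂stdG = ∫ z, exp (c * z - c ^ 2 / 2) * f z ∂stdG := by
  have hpdf (z : ℝ) :
      gaussianPDFReal 0 1 (z - c) = gaussianPDFReal 0 1 z * exp (c * z - c ^ 2 / 2) := by
    simp only [gaussianPDFReal, mul_assoc, ← exp_add, sub_zero, NNReal.coe_one]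
    ring_nf
  rw [integral_stdG, integral_stdG,
    ← integral_sub_right_eq_self (fun z => gaussianPDFReal 0 1 z * f (z + c)) c]
  simp only [hpdf, sub_add_cancel, mul_assoc]

lemma hasDerivAt_gaussianPDFReal_zero_one (z : ℝ) :
    HasDerivAt (gaussianPDFReal 0 1) (-(gaussianPDFReal 0 1 z * z)) z := by
  have hquad : HasDerivAt (fun z : ℝ => -(z - 0) ^ 2 / (2 * ((1 : NNReal) : ℝ))) (-z) z := by
    convert! ((((hasDerivAt_id z).sub_const 0).pow 2).neg).div_const (2 * ((1 : NNReal) : ℝ))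
      using 1
    simp only [Nat.cast_ofNat, id_eq, sub_zero, Nat.add_one_sub_one, pow_one, mul_one,
      NNReal.coe_one]
    ring
  convert! hquad.exp.const_mul (√(2 * π * ((1 : NNReal) : ℝ)))⁻¹ using 1
  simp only [gaussianPDFReal]
  ring

lemma integral_id_mul_stdG {f f' : ℝ → ℝ} (hf : ∀ z, HasDerivAt f (f' z) z)
    (hfi : Integrable f stdG) (hzf : Integrable (fun z => z * f z) stdG)
    (hf' : Integrable f' stdG) : ∫ z, z * f z ∂stdG = ∫ z, f' z ∂stdG := by
  have hparts := integral_mul_deriv_eq_deriv_mul_of_integrable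
    (fun z _ => hasDerivAt_gaussianPDFReal_zero_one z) (fun z _ => hf z)
    (integrable_stdG_iff.1 hf')
    ((integrable_stdG_iff.1 hzf).neg.congr (.of_forall fun z => by
      simp only [Pi.neg_apply, Pi.mul_apply]; ring))
    (integrable_stdG_iff.1 hfi)
  rw [integral_stdG, integral_stdG, hparts, ← integral_neg]
  exact integral_congr_ae (.of_forall fun z => by ring)

end GaussianMeasure

section AeBounded

variable {P : Measure ℝ} [IsFiniteMeasure P] {M : ℝ}

lemma exists_forall_abs_le_of_continuous {g : ℝ → ℝ} (hg : Continuous g) (M : ℝ) :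
    ∃ C, ∀ x, |x| ≤ M → |g x| ≤ C := by
  obtain ⟨C, hC⟩ := (isCompact_Icc (a := -M) (b := M)).exists_bound_of_continuousOn hg.continuousOn
  exact ⟨C, fun x hx => hC x (abs_le.1 hx)⟩

lemma integrable_of_ae_abs_le (hM : ∀ᵐ x ∂P, |x| ≤ M) {g : ℝ → ℝ} (hg : Continuous g) :
    Integrable g P := by
  obtain ⟨C, hC⟩ := exists_forall_abs_le_of_continuous hg M
  exact .of_bound hg.aestronglyMeasurable C (hM.mono hC)

lemma hasDerivAt_integral_of_ae_abs_le (hM : ∀ᵐ x ∂P, |x| ≤ M) {f f' : ℝ → ℝ → ℝ}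
    (hf : ∀ t x, HasDerivAt (fun t => f t x) (f' t x) t) (hfc : ∀ t, Continuous (f t))
    (hfc' : Continuous fun p : ℝ × ℝ => f' p.1 p.2) (t : ℝ) :
    HasDerivAt (fun t => ∫ x, f t x ∂P) (∫ x, f' t x ∂P) t := by
  obtain ⟨C, hC⟩ := ((isCompact_closedBall t 1).prod (isCompact_Icc (a := -M) (b := M)))
    |>.exists_bound_of_continuousOn hfc'.continuousOn
  refine (hasDerivAt_integral_of_dominated_loc_of_deriv_le (bound := fun _ => C)
    (Metric.closedBall_mem_nhds t one_pos) (.of_forall fun t => (hfc t).aestronglyMeasurable)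
    (integrable_of_ae_abs_le hM (hfc t))
    (hfc'.comp (by fun_prop : Continuous fun x : ℝ => (t, x))).aestronglyMeasurable
    ?_ (integrable_const C) (.of_forall fun x s _ => hf s x)).2
  filter_upwards [hM] with x hx s hs using hC (s, x) ⟨hs, abs_le.1 hx⟩

end AeBounded

/-- Families `f s u` that are continuous in `u` and of exponential order in `u`, locally uniformly
in `s`. Writing the bound as `exp (C * (1 + |u|))`, with one constant, makes the class visibly
closed under products. -/
structure ExpGrowth (f : ℝ → ℝ → ℝ) : Prop where
  continuous : ∀ s, Continuous (f s)
  bound : ∀ S, ∃ C, ∀ s u, |s| ≤ S → |f s u| ≤ exp (C * (1 + |u|))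

namespace ExpGrowth

variable {f g : ℝ → ℝ → ℝ}

lemma mono (hg : ExpGrowth g) (hf : ∀ s, Continuous (f s)) (hfg : ∀ s u, |f s u| ≤ |g s u|) :
    ExpGrowth f :=
  ⟨hf, fun S => (hg.bound S).imp fun _ hC s u hs => (hfg s u).trans (hC s u hs)⟩

lemma mul (hf : ExpGrowth f) (hg : ExpGrowth g) : ExpGrowth fun s u => f s u * g s u := by
  refine ⟨fun s => (hf.continuous s).mul (hg.continuous s), fun S => ?_⟩
  obtain ⟨C, hC⟩ := hf.bound S
  obtain ⟨D, hD⟩ := hg.bound S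
  refine ⟨C + D, fun s u hs => ?_⟩
  rw [abs_mul, add_mul, exp_add]
  exact mul_le_mul (hC s u hs) (hD s u hs) (abs_nonneg _) (exp_pos _).le

lemma add (hf : ExpGrowth f) (hg : ExpGrowth g) : ExpGrowth fun s u => f s u + g s u := by
  refine ⟨fun s => (hf.continuous s).add (hg.continuous s), fun S => ?_⟩
  obtain ⟨C, hC⟩ := hf.bound S
  obtain ⟨D, hD⟩ := hg.bound S
  refine ⟨1 + max C D, fun s u hs => ?_⟩
  have hw : 1 ≤ 1 + |u| := le_add_of_nonneg_right (abs_nonneg u)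
  calc |f s u + g s u| ≤ exp (C * (1 + |u|)) + exp (D * (1 + |u|)) :=
        (abs_add_le _ _).trans (add_le_add (hC s u hs) (hD s u hs))
    _ ≤ exp (max C D * (1 + |u|)) + exp (max C D * (1 + |u|)) := by
        gcongr
        exacts [le_max_left C D, le_max_right C D]
    _ ≤ exp (1 + |u|) * exp (max C D * (1 + |u|)) := by
        rw [← two_mul]
        gcongr
        linarith [add_one_le_exp (1 + |u|)]
    _ = exp ((1 + max C D) * (1 + |u|)) := by rw [← exp_add]; ring_nf

lemma of_continuous {h : ℝ → ℝ} (hh : Continuous h) : ExpGrowth fun s _ => h s := by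
  refine ⟨fun s => continuous_const, fun S => ?_⟩
  obtain ⟨C, hC⟩ := exists_forall_abs_le_of_continuous hh S
  refine ⟨C, fun s u hs => (hC s hs).trans ?_⟩
  have hC0 : 0 ≤ C := (abs_nonneg _).trans (hC s hs)
  nlinarith [add_one_le_exp (C * (1 + |u|)), mul_nonneg hC0 (abs_nonneg u)]

lemma of_forall_abs_le {h : ℝ → ℝ} (hh : Continuous h) {C : ℝ} (hC : ∀ u, |h u| ≤ C) :
    ExpGrowth fun _ u => h u := by
  refine ⟨fun _ => hh, fun _ => ⟨C, fun _ u _ => (hC u).trans ?_⟩⟩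
  have hC0 : 0 ≤ C := (abs_nonneg _).trans (hC u)
  nlinarith [add_one_le_exp (C * (1 + |u|)), mul_nonneg hC0 (abs_nonneg u)]

lemma snd : ExpGrowth fun _ u => u :=
  ⟨fun _ => continuous_id, fun _ => ⟨1, fun _ u _ => by linarith [add_one_le_exp (1 * (1 + |u|))]⟩⟩

lemma mul_left_of_continuous {h : ℝ → ℝ} (hh : Continuous h) (hf : ExpGrowth f) :
    ExpGrowth fun s u => h s * f s u :=
  (of_continuous hh).mul hf

lemma sub (hf : ExpGrowth f) (hg : ExpGrowth g) : ExpGrowth fun s u => f s u - g s u := by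
  simpa only [sub_eq_add_neg, neg_one_mul] using
    hf.add (mul_left_of_continuous (h := fun _ => -1) continuous_const hg)

lemma log (hf : ExpGrowth f) (hpos : ∀ s u, 0 < f s u) (hinv : ExpGrowth fun s u => (f s u)⁻¹) :
    ExpGrowth fun s u => Real.log (f s u) := by
  refine (hf.add hinv).mono (fun s => (hf.continuous s).log fun u => (hpos s u).ne')
    fun s u => ?_
  have h := hpos s u
  rw [abs_of_pos (add_pos h (inv_pos.2 h)), abs_le]
  constructor <;>
    linarith [log_le_self h.le, log_le_self (inv_pos.2 h).le, log_inv (f s u), inv_pos.2 h]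

lemma integrable (hf : ExpGrowth f) (s : ℝ) : Integrable (f s) stdG := by
  obtain ⟨C, hC⟩ := hf.bound |s|
  refine ((integrable_exp_mul_abs_stdG C).const_mul (exp C)).mono'
    (hf.continuous s).aestronglyMeasurable (.of_forall fun u => (hC s u le_rfl).trans_eq ?_)
  rw [← exp_add]
  ring_nf

end ExpGrowth

/-- The explicit factor `u` in the derivative of `F` is removed by Gaussian integration by parts. -/
lemma hasDerivAt_integral_gaussian_channel {F A B C : ℝ → ℝ → ℝ}
    (hF : ∀ s u, HasDerivAt (fun s => F s u) (u * A s u + B s u) s)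
    (hA : ∀ s u, HasDerivAt (A s) (C s u) u) (hFg : ExpGrowth F) (hAg : ExpGrowth A)
    (hBg : ExpGrowth B) (hCg : ExpGrowth C) (s : ℝ) :
    HasDerivAt (fun s => ∫ u, F s u ∂stdG) (∫ u, (C s u + B s u) ∂stdG) s := by
  have hF' : ExpGrowth fun s u => u * A s u + B s u := (ExpGrowth.snd.mul hAg).add hBg
  obtain ⟨c, hc⟩ := hF'.bound (|s| + 1)
  have hstein : ∫ u, (u * A s u + B s u) ∂stdG = ∫ u, (C s u + B s u) ∂stdG := by
    have hzA := (ExpGrowth.snd.mul hAg).integrable s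
    rw [integral_add hzA (hBg.integrable s), integral_add (hCg.integrable s) (hBg.integrable s),
      integral_id_mul_stdG (hA s) (hAg.integrable s) hzA (hCg.integrable s)]
  rw [← hstein]
  refine (hasDerivAt_integral_of_dominated_loc_of_deriv_le
    (bound := fun u => exp c * exp (c * |u|)) (Metric.closedBall_mem_nhds s one_pos)
    (.of_forall fun t => (hFg.continuous t).aestronglyMeasurable) (hFg.integrable s)
    (hF'.continuous s).aestronglyMeasurable (.of_forall fun u t ht => ?_)
    ((integrable_exp_mul_abs_stdG c).const_mul _) (.of_forall fun u t _ => hF t u)).2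
  have ht : |t| ≤ |s| + 1 := by
    have hts : |t - s| ≤ 1 := ht
    linarith [abs_sub_abs_le_abs_sub t s]
  exact (hc t u ht).trans_eq (by rw [← exp_add]; ring_nf)

/-- For the channel `u = s x + z` with prior `P` on `x` and Gaussian noise `z`, the integral of
`x ^ k` against the likelihood ratio `exp (s x u - s² x² / 2)` of `u` with respect to pure noise. -/
def likelihoodMoment (P : Measure ℝ) (k : ℕ) (s u : ℝ) : ℝ :=
  ∫ x, x ^ k * exp (s * x * u - s ^ 2 * x ^ 2 / 2) ∂P

/-- The mean of `x` given `u` in the channel `u = s x + z`. -/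
def posteriorMean (P : Measure ℝ) (s u : ℝ) : ℝ :=
  likelihoodMoment P 1 s u / likelihoodMoment P 0 s u

/-- The variance of `x` given `u` in the channel `u = s x + z`. -/
def posteriorVariance (P : Measure ℝ) (s u : ℝ) : ℝ :=
  likelihoodMoment P 2 s u / likelihoodMoment P 0 s u - posteriorMean P s u ^ 2

/-- The relative entropy of the law of `u = s x + z` with respect to pure noise; it is `ψ` as a
function of the signal strength `s = √r`. -/
def freeEnergy (P : Measure ℝ) (s : ℝ) : ℝ :=
  ∫ u, likelihoodMoment P 0 s u * log (likelihoodMoment P 0 s u) ∂stdG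

/-- The second moment of the posterior mean in the channel `u = s x + z`, which is also the
correlation of the posterior mean with `x`. -/
def overlap (P : Measure ℝ) (s : ℝ) : ℝ :=
  ∫ u, posteriorMean P s u * likelihoodMoment P 1 s u ∂stdG

lemma abs_likelihood_exponent_le {s S x M : ℝ} (hs : |s| ≤ S) (hx : |x| ≤ M) (u : ℝ) :
    |s * x * u - s ^ 2 * x ^ 2 / 2| ≤ (S * M + (S * M) ^ 2) * (1 + |u|) := by
  have hsx : |s * x| ≤ S * M := by
    rw [abs_mul]
    exact mul_le_mul hs hx (abs_nonneg x) ((abs_nonneg s).trans hs)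
  have hsq : (s * x) ^ 2 ≤ (S * M) ^ 2 := sq_le_sq' (abs_le.1 hsx).1 (abs_le.1 hsx).2
  calc |s * x * u - s ^ 2 * x ^ 2 / 2| ≤ |s * x * u| + |s ^ 2 * x ^ 2 / 2| := abs_sub _ _
    _ = |s * x| * |u| + (s * x) ^ 2 / 2 := by
        rw [abs_mul, abs_of_nonneg (by positivity : 0 ≤ s ^ 2 * x ^ 2 / 2), mul_pow]
    _ ≤ (S * M + (S * M) ^ 2) * (1 + |u|) := by
        nlinarith [abs_nonneg u, abs_nonneg (s * x), sq_nonneg (s * x),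
          mul_le_mul_of_nonneg_right hsx (abs_nonneg u),
          mul_nonneg (sq_nonneg (S * M)) (abs_nonneg u)]

lemma overlap_zero (P : Measure ℝ) : overlap P 0 = (∫ x, x ∂P) ^ 2 / P.real Set.univ := by
  simp [overlap, posteriorMean, likelihoodMoment, sq, div_mul_eq_mul_div]

section Channel

variable {P : Measure ℝ} [IsFiniteMeasure P] {M : ℝ}

lemma hasDerivAt_likelihoodMoment_signal (hM : ∀ᵐ x ∂P, |x| ≤ M) (k : ℕ) (s u : ℝ) :
    HasDerivAt (fun s => likelihoodMoment P k s u)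
      (u * likelihoodMoment P (k + 1) s u - s * likelihoodMoment P (k + 2) s u) s := by
  have hint (n : ℕ) : Integrable (fun x => x ^ n * exp (s * x * u - s ^ 2 * x ^ 2 / 2)) P :=
    integrable_of_ae_abs_le hM (by fun_prop)
  have hexp (t x : ℝ) : HasDerivAt (fun t => x ^ k * exp (t * x * u - t ^ 2 * x ^ 2 / 2))
      (u * (x ^ (k + 1) * exp (t * x * u - t ^ 2 * x ^ 2 / 2))
        - t * (x ^ (k + 2) * exp (t * x * u - t ^ 2 * x ^ 2 / 2))) t := by
    convert! (((((hasDerivAt_id t).mul_const x).mul_const u).sub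
      (((hasDerivAt_pow 2 t).mul_const (x ^ 2)).div_const 2)).exp).const_mul (x ^ k) using 1
    simp only [id, Pi.sub_apply, Nat.cast_ofNat]
    ring
  rw [likelihoodMoment, likelihoodMoment, ← integral_const_mul, ← integral_const_mul,
    ← integral_sub ((hint _).const_mul u) ((hint _).const_mul s)]
  exact hasDerivAt_integral_of_ae_abs_le hM hexp (fun t => by fun_prop) (by fun_prop) s

lemma hasDerivAt_likelihoodMoment (hM : ∀ᵐ x ∂P, |x| ≤ M) (k : ℕ) (s u : ℝ) :
    HasDerivAt (likelihoodMoment P k s) (s * likelihoodMoment P (k + 1) s u) u := by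
  have hexp (t x : ℝ) : HasDerivAt (fun t => x ^ k * exp (s * x * t - s ^ 2 * x ^ 2 / 2))
      (s * (x ^ (k + 1) * exp (s * x * t - s ^ 2 * x ^ 2 / 2))) t := by
    convert! ((((hasDerivAt_id t).const_mul (s * x)).sub_const (s ^ 2 * x ^ 2 / 2)).exp).const_mul
      (x ^ k) using 1
    simp only [id]
    ring
  rw [likelihoodMoment, ← integral_const_mul]
  exact hasDerivAt_integral_of_ae_abs_le hM hexp (fun t => by fun_prop) (by fun_prop) u

lemma expGrowth_likelihoodMoment (hM : ∀ᵐ x ∂P, |x| ≤ M) (k : ℕ) :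
    ExpGrowth (likelihoodMoment P k) := by
  refine ⟨fun s => continuous_iff_continuousAt.2 fun u =>
    (hasDerivAt_likelihoodMoment hM k s u).continuousAt, fun S => ?_⟩
  set D := |M ^ k * P.real Set.univ|
  refine ⟨D + (S * M + (S * M) ^ 2), fun s u hs => ?_⟩
  have hbound : |likelihoodMoment P k s u|
      ≤ M ^ k * exp ((S * M + (S * M) ^ 2) * (1 + |u|)) * P.real Set.univ := by
    rw [← norm_eq_abs, likelihoodMoment]
    refine norm_integral_le_of_norm_le_const (hM.mono fun x hx => ?_)
    have hM0 : 0 ≤ M := (abs_nonneg x).trans hx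
    rw [norm_mul, norm_pow, norm_eq_abs, norm_eq_abs, abs_exp]
    gcongr
    exact (le_abs_self _).trans (abs_likelihood_exponent_le hs hx u)
  have hD : M ^ k * P.real Set.univ ≤ exp (D * (1 + |u|)) := by
    have hDu : 0 ≤ D * |u| := by positivity
    linarith [add_one_le_exp (D * (1 + |u|)), le_abs_self (M ^ k * P.real Set.univ)]
  calc |likelihoodMoment P k s u|
      ≤ M ^ k * P.real Set.univ * exp ((S * M + (S * M) ^ 2) * (1 + |u|)) :=
        hbound.trans_eq (by ring)
    _ ≤ exp (D * (1 + |u|)) * exp ((S * M + (S * M) ^ 2) * (1 + |u|)) := by gcongr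
    _ = exp ((D + (S * M + (S * M) ^ 2)) * (1 + |u|)) := by rw [← exp_add]; ring_nf

lemma likelihoodMoment_zero_pos [NeZero P] (hM : ∀ᵐ x ∂P, |x| ≤ M) (s u : ℝ) :
    0 < likelihoodMoment P 0 s u := by
  simpa only [likelihoodMoment, pow_zero, one_mul] using
    integral_exp_pos (μ := P) (integrable_of_ae_abs_le hM (by fun_prop))

lemma expGrowth_inv_likelihoodMoment_zero [NeZero P] (hM : ∀ᵐ x ∂P, |x| ≤ M) :
    ExpGrowth fun s u => (likelihoodMoment P 0 s u)⁻¹ := by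
  refine ⟨fun s => ((expGrowth_likelihoodMoment hM 0).continuous s).inv₀
    fun u => (likelihoodMoment_zero_pos hM s u).ne', fun S => ?_⟩
  set D := (P.real Set.univ)⁻¹
  have hP : 0 < P.real Set.univ := measureReal_univ_pos
  refine ⟨D + (S * M + (S * M) ^ 2), fun s u hs => ?_⟩
  have hbound : P.real Set.univ * exp (-((S * M + (S * M) ^ 2) * (1 + |u|)))
      ≤ likelihoodMoment P 0 s u := by
    rw [← smul_eq_mul, ← integral_const, likelihoodMoment]
    refine integral_mono_ae (integrable_const _) (integrable_of_ae_abs_le hM (by fun_prop))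
      (hM.mono fun x hx => ?_)
    simp only [pow_zero, one_mul]
    gcongr
    exact (abs_le.1 (abs_likelihood_exponent_le hs hx u)).1
  have hD : D ≤ exp (D * (1 + |u|)) := by
    have hDu : 0 ≤ D * |u| := by positivity
    linarith [add_one_le_exp (D * (1 + |u|))]
  calc |(likelihoodMoment P 0 s u)⁻¹| = (likelihoodMoment P 0 s u)⁻¹ :=
        abs_of_pos (inv_pos.2 (likelihoodMoment_zero_pos hM s u))
    _ ≤ (P.real Set.univ * exp (-((S * M + (S * M) ^ 2) * (1 + |u|))))⁻¹ :=
        inv_anti₀ (by positivity) hbound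
    _ = D * exp ((S * M + (S * M) ^ 2) * (1 + |u|)) := by rw [mul_inv, exp_neg, inv_inv]
    _ ≤ exp (D * (1 + |u|)) * exp ((S * M + (S * M) ^ 2) * (1 + |u|)) := by gcongr
    _ = exp ((D + (S * M + (S * M) ^ 2)) * (1 + |u|)) := by rw [← exp_add]; ring_nf

variable [NeZero P]

lemma expGrowth_log_likelihoodMoment_zero (hM : ∀ᵐ x ∂P, |x| ≤ M) :
    ExpGrowth fun s u => log (likelihoodMoment P 0 s u) :=
  (expGrowth_likelihoodMoment hM 0).log (likelihoodMoment_zero_pos hM)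
    (expGrowth_inv_likelihoodMoment_zero hM)

lemma expGrowth_posteriorMean (hM : ∀ᵐ x ∂P, |x| ≤ M) : ExpGrowth (posteriorMean P) :=
  (expGrowth_likelihoodMoment hM 1).mul (expGrowth_inv_likelihoodMoment_zero hM)

lemma expGrowth_posteriorVariance (hM : ∀ᵐ x ∂P, |x| ≤ M) : ExpGrowth (posteriorVariance P) := by
  have h := ((expGrowth_likelihoodMoment hM 2).mul (expGrowth_inv_likelihoodMoment_zero hM)).sub
    ((expGrowth_posteriorMean hM).mul (expGrowth_posteriorMean hM))
  simp only [← sq] at h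
  exact h

lemma posteriorMean_mul_likelihoodMoment_zero (hM : ∀ᵐ x ∂P, |x| ≤ M) (s u : ℝ) :
    posteriorMean P s u * likelihoodMoment P 0 s u = likelihoodMoment P 1 s u :=
  div_mul_cancel₀ _ (likelihoodMoment_zero_pos hM s u).ne'

lemma posteriorVariance_mul_likelihoodMoment_zero (hM : ∀ᵐ x ∂P, |x| ≤ M) (s u : ℝ) :
    posteriorVariance P s u * likelihoodMoment P 0 s u
      = likelihoodMoment P 2 s u - posteriorMean P s u * likelihoodMoment P 1 s u := by
  rw [posteriorVariance, sub_mul, div_mul_cancel₀ _ (likelihoodMoment_zero_pos hM s u).ne', sq,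
    mul_assoc, posteriorMean_mul_likelihoodMoment_zero hM]

lemma hasDerivAt_posteriorMean (hM : ∀ᵐ x ∂P, |x| ≤ M) (s u : ℝ) :
    HasDerivAt (posteriorMean P s) (s * posteriorVariance P s u) u := by
  have hpos := (likelihoodMoment_zero_pos hM s u).ne'
  convert! (hasDerivAt_likelihoodMoment hM 1 s u).div (hasDerivAt_likelihoodMoment hM 0 s u) hpos
    using 1
  simp only [posteriorVariance, posteriorMean]
  field_simp

lemma hasDerivAt_freeEnergy (hM : ∀ᵐ x ∂P, |x| ≤ M) (s : ℝ) :
    HasDerivAt (freeEnergy P) (s * overlap P s) s := by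
  have hpos := likelihoodMoment_zero_pos hM
  have hlog : ExpGrowth fun s u => 1 + log (likelihoodMoment P 0 s u) :=
    (ExpGrowth.of_continuous (h := fun _ => 1) continuous_const).add
      (expGrowth_log_likelihoodMoment_zero hM)
  have hℓ := expGrowth_likelihoodMoment hM
  rw [overlap, ← integral_const_mul]
  convert! hasDerivAt_integral_gaussian_channel
    (F := fun s u => likelihoodMoment P 0 s u * log (likelihoodMoment P 0 s u))
    (A := fun s u => likelihoodMoment P 1 s u * (1 + log (likelihoodMoment P 0 s u)))
    (B := fun s u => -s * (likelihoodMoment P 2 s u * (1 + log (likelihoodMoment P 0 s u))))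
    (C := fun s u => s * (likelihoodMoment P 2 s u * (1 + log (likelihoodMoment P 0 s u))
      + posteriorMean P s u * likelihoodMoment P 1 s u))
    (fun s u => ?_) (fun s u => ?_) ((hℓ 0).mul (expGrowth_log_likelihoodMoment_zero hM))
    ((hℓ 1).mul hlog) (.mul_left_of_continuous continuous_neg ((hℓ 2).mul hlog))
    (.mul_left_of_continuous continuous_id
      (((hℓ 2).mul hlog).add ((expGrowth_posteriorMean hM).mul (hℓ 1)))) s using 3
  · ring
  · have h := hasDerivAt_likelihoodMoment_signal hM 0 s u
    convert! h.mul (h.log (hpos s u).ne') using 1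
    field_simp [(hpos s u).ne']
    ring
  · convert! (hasDerivAt_likelihoodMoment hM 1 s u).mul
      (((hasDerivAt_likelihoodMoment hM 0 s u).log (hpos s u).ne').const_add 1) using 1
    simp only [posteriorMean]
    field_simp [(hpos s u).ne']

lemma hasDerivAt_posteriorMean_signal (hM : ∀ᵐ x ∂P, |x| ≤ M) (s u : ℝ) :
    HasDerivAt (fun s => posteriorMean P s u)
      (u * posteriorVariance P s u - s * (likelihoodMoment P 3 s u / likelihoodMoment P 0 s u
        - posteriorMean P s u * (likelihoodMoment P 2 s u / likelihoodMoment P 0 s u))) s := by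
  have hpos := (likelihoodMoment_zero_pos hM s u).ne'
  convert! (hasDerivAt_likelihoodMoment_signal hM 1 s u).div
    (hasDerivAt_likelihoodMoment_signal hM 0 s u) hpos using 1
  simp only [posteriorVariance, posteriorMean]
  field_simp
  ring

lemma hasDerivAt_overlap (hM : ∀ᵐ x ∂P, |x| ≤ M) (s : ℝ) :
    HasDerivAt (overlap P)
      (∫ u, 2 * s * (posteriorVariance P s u ^ 2 * likelihoodMoment P 0 s u) ∂stdG) s := by
  have hpos := likelihoodMoment_zero_pos hM
  have hℓ := expGrowth_likelihoodMoment hM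
  have hm := expGrowth_posteriorMean hM
  have hV := expGrowth_posteriorVariance hM
  convert! hasDerivAt_integral_gaussian_channel
    (F := fun s u => posteriorMean P s u * likelihoodMoment P 1 s u)
    (A := fun s u => posteriorMean P s u *
      (2 * likelihoodMoment P 2 s u - posteriorMean P s u * likelihoodMoment P 1 s u))
    (B := fun s u => -s * (posteriorMean P s u *
      (2 * likelihoodMoment P 3 s u - posteriorMean P s u * likelihoodMoment P 2 s u)))
    (C := fun s u => s * (posteriorVariance P s u *
        (2 * likelihoodMoment P 2 s u - posteriorMean P s u * likelihoodMoment P 1 s u)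
      + posteriorMean P s u * (2 * likelihoodMoment P 3 s u
        - (posteriorVariance P s u * likelihoodMoment P 1 s u
          + posteriorMean P s u * likelihoodMoment P 2 s u))))
    (fun s u => ?_) (fun s u => ?_) (hm.mul (hℓ 1))
    (hm.mul ((hℓ 2).mul_left_of_continuous continuous_const |>.sub (hm.mul (hℓ 1))))
    (.mul_left_of_continuous continuous_neg
      (hm.mul ((hℓ 3).mul_left_of_continuous continuous_const |>.sub (hm.mul (hℓ 2)))))
    (.mul_left_of_continuous continuous_id
      ((hV.mul ((hℓ 2).mul_left_of_continuous continuous_const |>.sub (hm.mul (hℓ 1)))).add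
        (hm.mul ((hℓ 3).mul_left_of_continuous continuous_const |>.sub
          ((hV.mul (hℓ 1)).add (hm.mul (hℓ 2))))))) s using 3
  · rw [sq, mul_assoc (posteriorVariance _ _ _), posteriorVariance_mul_likelihoodMoment_zero hM]
    ring
  · convert! (hasDerivAt_posteriorMean_signal hM s u).mul
      (hasDerivAt_likelihoodMoment_signal hM 1 s u) using 1
    simp only [posteriorVariance, posteriorMean]
    field_simp [(hpos s u).ne']
    ring
  · convert! (hasDerivAt_posteriorMean hM s u).fun_mul
      (((hasDerivAt_likelihoodMoment hM 2 s u).const_mul 2).fun_sub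
        ((hasDerivAt_posteriorMean hM s u).fun_mul (hasDerivAt_likelihoodMoment hM 1 s u))) using 1
    ring

lemma posteriorVariance_mul_likelihoodMoment_zero_eq_integral (hM : ∀ᵐ x ∂P, |x| ≤ M) (s u : ℝ) :
    posteriorVariance P s u * likelihoodMoment P 0 s u
      = ∫ x, (x - posteriorMean P s u) ^ 2 * exp (s * x * u - s ^ 2 * x ^ 2 / 2) ∂P := by
  have hint (k : ℕ) : Integrable (fun x => x ^ k * exp (s * x * u - s ^ 2 * x ^ 2 / 2)) P :=
    integrable_of_ae_abs_le hM (by fun_prop)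
  set m := posteriorMean P s u
  have hexpand (x : ℝ) : (x - m) ^ 2 * exp (s * x * u - s ^ 2 * x ^ 2 / 2)
      = x ^ 2 * exp (s * x * u - s ^ 2 * x ^ 2 / 2)
        + (m ^ 2 * (x ^ 0 * exp (s * x * u - s ^ 2 * x ^ 2 / 2))
          - 2 * m * (x ^ 1 * exp (s * x * u - s ^ 2 * x ^ 2 / 2))) := by ring
  simp only [hexpand]
  rw [integral_add (hint 2) (integrable_of_ae_abs_le hM (by fun_prop)),
    integral_sub ((hint 0).const_mul _) ((hint 1).const_mul _), integral_const_mul,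
    integral_const_mul, posteriorVariance_mul_likelihoodMoment_zero hM]
  change _ = likelihoodMoment P 2 s u
    + (m ^ 2 * likelihoodMoment P 0 s u - 2 * m * likelihoodMoment P 1 s u)
  linear_combination (-m) * posteriorMean_mul_likelihoodMoment_zero hM s u

lemma posteriorVariance_pos (hM : ∀ᵐ x ∂P, |x| ≤ M) (hP : ∀ c, ¬ ∀ᵐ x ∂P, x = c) (s u : ℝ) :
    0 < posteriorVariance P s u := by
  refine pos_of_mul_pos_left ?_ (likelihoodMoment_zero_pos hM s u).le
  rw [posteriorVariance_mul_likelihoodMoment_zero_eq_integral hM]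
  have hnonneg : 0 ≤ᵐ[P] fun x =>
      (x - posteriorMean P s u) ^ 2 * exp (s * x * u - s ^ 2 * x ^ 2 / 2) :=
    .of_forall fun x => by positivity
  refine (integral_nonneg_of_ae hnonneg).lt_of_ne' fun hzero => hP (posteriorMean P s u) ?_
  filter_upwards [(integral_eq_zero_iff_of_nonneg_ae hnonneg
    (integrable_of_ae_abs_le hM (by fun_prop))).1 hzero] with x hx
  simpa [sub_eq_zero, (exp_pos _).ne'] using hx

lemma continuous_overlap (hM : ∀ᵐ x ∂P, |x| ≤ M) : Continuous (overlap P) :=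
  continuous_iff_continuousAt.2 fun s => (hasDerivAt_overlap hM s).continuousAt

lemma strictMonoOn_overlap (hM : ∀ᵐ x ∂P, |x| ≤ M) (hP : ∀ c, ¬ ∀ᵐ x ∂P, x = c) :
    StrictMonoOn (overlap P) (Set.Ici 0) := by
  refine strictMonoOn_of_deriv_pos (convex_Ici 0) (continuous_overlap hM).continuousOn
    fun s hs => ?_
  rw [interior_Ici] at hs
  have hintegrand (u : ℝ) :
      0 < 2 * s * (posteriorVariance P s u ^ 2 * likelihoodMoment P 0 s u) := by
    have hV := posteriorVariance_pos hM hP s u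
    have hℓ := likelihoodMoment_zero_pos hM s u
    have hs0 : 0 < s := hs
    positivity
  have hV := expGrowth_posteriorVariance hM
  have hint := (((hV.mul hV).mul (expGrowth_likelihoodMoment hM 0)).integrable s).const_mul (2 * s)
  simp only [← sq] at hint
  rw [(hasDerivAt_overlap hM s).deriv,
    integral_pos_iff_support_of_nonneg (fun u => (hintegrand u).le) hint,
    Function.support_eq_univ fun u => (hintegrand u).ne', measure_univ]
  exact one_pos

end Channel

lemma integral_channel_eq_integral_likelihoodMoment {P : Measure ℝ} [IsFiniteMeasure P] {M : ℝ}
    (hM : ∀ᵐ x ∂P, |x| ≤ M) {Φ : ℝ → ℝ → ℝ} (hΦ : ExpGrowth Φ) (k : ℕ) (s : ℝ) :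
    ∫ x, x ^ k * ∫ z, Φ s (s * x + z) ∂stdG ∂P
      = ∫ u, likelihoodMoment P k s u * Φ s u ∂stdG := by
  set E := |s| * M + (|s| * M) ^ 2
  have hexp : ExpGrowth fun _ z => exp (E * (1 + |z|)) :=
    ⟨fun _ => by fun_prop, fun _ => ⟨E, fun _ z _ => (abs_exp _).le⟩⟩
  have hint : Integrable (Function.uncurry fun x z =>
      x ^ k * exp (s * x * z - s ^ 2 * x ^ 2 / 2) * Φ s z) (P.prod stdG) := by
    have hΦc := hΦ.continuous s
    refine ((((hexp.mul hΦ).integrable s).norm.const_mul (M ^ k)).comp_snd P).mono'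
      (Continuous.aestronglyMeasurable (by fun_prop)) ?_
    filter_upwards [Measure.quasiMeasurePreserving_fst.ae hM] with ⟨x, z⟩ hx
    have hM0 : 0 ≤ M := (abs_nonneg x).trans hx
    simp only [Function.uncurry_apply_pair, norm_mul, norm_pow, norm_eq_abs, abs_exp, mul_assoc]
    gcongr
    simpa only [mul_assoc] using
      (le_abs_self _).trans (abs_likelihood_exponent_le (le_refl |s|) hx z)
  calc ∫ x, x ^ k * ∫ z, Φ s (s * x + z) ∂stdG ∂P
      = ∫ x, ∫ z, x ^ k * exp (s * x * z - s ^ 2 * x ^ 2 / 2) * Φ s z ∂stdG ∂P := by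
        simp only [add_comm (s * _), integral_stdG_comp_add, mul_pow, ← integral_const_mul,
          mul_assoc]
    _ = ∫ z, ∫ x, x ^ k * exp (s * x * z - s ^ 2 * x ^ 2 / 2) * Φ s z ∂P ∂stdG :=
        integral_integral_swap hint
    _ = ∫ u, likelihoodMoment P k s u * Φ s u ∂stdG := by
        simp only [integral_mul_const, likelihoodMoment]

section SparsePrior

variable {P0 : Measure ℝ} {ρ M : ℝ}

lemma ae_sparsePrior_iff (hρ : ρ ∈ Set.Ioo (0 : ℝ) 1) {p : ℝ → Prop} :
    (∀ᵐ x ∂sparsePrior ρ P0, p x) ↔ p 0 ∧ ∀ᵐ x ∂P0, p x := by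
  rw [sparsePrior, ae_add_measure_iff, Measure.ae_ennreal_smul_measure_iff,
    Measure.ae_ennreal_smul_measure_iff, ae_dirac_eq,
    Filter.eventually_pure]
  · exact (ENNReal.ofReal_pos.2 hρ.1).ne'
  · exact (ENNReal.ofReal_pos.2 (sub_pos.2 hρ.2)).ne'

lemma not_ae_sparsePrior_eq (hP0 : ¬ ∀ᵐ x ∂P0, x = 0) (hρ : ρ ∈ Set.Ioo (0 : ℝ) 1) (c : ℝ) :
    ¬ ∀ᵐ x ∂sparsePrior ρ P0, x = c := by
  rw [ae_sparsePrior_iff hρ]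
  rintro ⟨rfl, h⟩
  exact hP0 h

instance [IsFiniteMeasure P0] : IsFiniteMeasure (sparsePrior ρ P0) := by
  have := (Measure.dirac (0 : ℝ)).smul_finite (ENNReal.ofReal_ne_top (r := 1 - ρ))
  have := P0.smul_finite (ENNReal.ofReal_ne_top (r := ρ))
  exact inferInstanceAs (IsFiniteMeasure (_ + _))

lemma integral_sparsePrior (hρ : ρ ∈ Set.Ioo (0 : ℝ) 1) {f : ℝ → ℝ} (hf : Integrable f P0) :
    ∫ x, f x ∂sparsePrior ρ P0 = (1 - ρ) * f 0 + ρ * ∫ x, f x ∂P0 := by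
  have hdirac : Integrable f (Measure.dirac 0) := integrable_dirac enorm_lt_top
  rw [sparsePrior, integral_add_measure (hdirac.smul_measure ENNReal.ofReal_ne_top)
    (hf.smul_measure ENNReal.ofReal_ne_top), integral_smul_measure, integral_smul_measure,
    integral_dirac, ENNReal.toReal_ofReal (sub_nonneg.2 hρ.2.le), ENNReal.toReal_ofReal hρ.1.le,
    smul_eq_mul, smul_eq_mul]

lemma likelihoodMoment_zero_sparsePrior [IsFiniteMeasure P0] (hM : ∀ᵐ x ∂P0, |x| ≤ M)
    (hρ : ρ ∈ Set.Ioo (0 : ℝ) 1) (s u : ℝ) :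
    likelihoodMoment (sparsePrior ρ P0) 0 s u = (1 - ρ) + ρ * likelihoodMoment P0 0 s u := by
  rw [likelihoodMoment, integral_sparsePrior hρ (integrable_of_ae_abs_le hM (by fun_prop))]
  simp [likelihoodMoment]

lemma likelihoodMoment_one_sparsePrior [IsFiniteMeasure P0] (hM : ∀ᵐ x ∂P0, |x| ≤ M)
    (hρ : ρ ∈ Set.Ioo (0 : ℝ) 1) (s u : ℝ) :
    likelihoodMoment (sparsePrior ρ P0) 1 s u = ρ * likelihoodMoment P0 1 s u := by
  rw [likelihoodMoment, integral_sparsePrior hρ (integrable_of_ae_abs_le hM (by fun_prop))]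
  simp [likelihoodMoment]

variable [IsProbabilityMeasure P0]

lemma ae_sparsePrior_abs_le (hM : ∀ᵐ x ∂P0, |x| ≤ M) (hρ : ρ ∈ Set.Ioo (0 : ℝ) 1) :
    ∀ᵐ x ∂sparsePrior ρ P0, |x| ≤ M := by
  obtain ⟨x, hx⟩ := hM.exists
  exact (ae_sparsePrior_iff hρ).2 ⟨abs_zero.trans_le ((abs_nonneg x).trans hx), hM⟩

instance : NeZero (sparsePrior ρ P0) := by
  refine ⟨fun h => ?_⟩
  have huniv : ENNReal.ofReal (1 - ρ) + ENNReal.ofReal ρ = 0 := by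
    simpa [sparsePrior] using congrArg (· Set.univ) h
  simp only [add_eq_zero, ENNReal.ofReal_eq_zero] at huniv
  linarith [huniv.1, huniv.2]

lemma psiD_eq_freeEnergy (hM : ∀ᵐ x ∂P0, |x| ≤ M) (hρ : ρ ∈ Set.Ioo (0 : ℝ) 1) {r : ℝ}
    (hr : 0 ≤ r) : psiD P0 ρ r = freeEnergy (sparsePrior ρ P0) √r := by
  have hM' := ae_sparsePrior_abs_le hM hρ
  have hexponent (xs z x : ℝ) : r * xs * x + √r * z * x - r * x ^ 2 / 2
      = √r * x * (√r * xs + z) - √r ^ 2 * x ^ 2 / 2 := by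
    linear_combination (xs * x - x ^ 2 / 2) * -(sq_sqrt hr)
  simpa only [likelihoodMoment, psiD, freeEnergy, hexponent, pow_zero, one_mul] using
    integral_channel_eq_integral_likelihoodMoment hM' (expGrowth_log_likelihoodMoment_zero hM') 0 √r

lemma overlap_sparsePrior_zero_div (hM : ∀ᵐ x ∂P0, |x| ≤ M) (hρ : ρ ∈ Set.Ioo (0 : ℝ) 1) :
    overlap (sparsePrior ρ P0) 0 / ρ = ρ * meanP P0 ^ 2 := by
  have hmass : (sparsePrior ρ P0).real Set.univ = 1 := by
    simpa using integral_sparsePrior hρ (integrable_const (1 : ℝ) (μ := P0))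
  rw [overlap_zero, hmass, integral_sparsePrior (f := fun x => x) hρ
    (integrable_of_ae_abs_le hM continuous_id), meanP, mul_zero, zero_add, div_one, mul_pow]
  field_simp

end SparsePrior

lemma integral_estimator_le_overlap {P : Measure ℝ} [IsFiniteMeasure P] [NeZero P] {M : ℝ}
    (hM : ∀ᵐ x ∂P, |x| ≤ M) {f : ℝ → ℝ} (hf : ExpGrowth fun _ u => f u) (s : ℝ) :
    ∫ u, (2 * f u * likelihoodMoment P 1 s u - f u ^ 2 * likelihoodMoment P 0 s u) ∂stdG
      ≤ overlap P s := by
  have hℓ := expGrowth_likelihoodMoment hM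
  have hestimator := ((hf.mul (hℓ 1)).integrable s).const_mul 2
    |>.sub (((hf.mul hf).mul (hℓ 0)).integrable s)
  simp only [← sq, ← mul_assoc] at hestimator
  refine integral_mono hestimator (((expGrowth_posteriorMean hM).mul (hℓ 1)).integrable s)
    fun u => ?_
  have hsq : 0 ≤ (posteriorMean P s u - f u) ^ 2 * likelihoodMoment P 0 s u :=
    mul_nonneg (sq_nonneg _) (likelihoodMoment_zero_pos hM s u).le
  linear_combination hsq + (posteriorMean P s u - 2 * f u) *
    posteriorMean_mul_likelihoodMoment_zero hM s u

lemma overlap_eq_integral_posteriorMean {P : Measure ℝ} [IsFiniteMeasure P] [NeZero P] {M : ℝ}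
    (hM : ∀ᵐ x ∂P, |x| ≤ M) (s : ℝ) :
    overlap P s = ∫ u, (2 * posteriorMean P s u * likelihoodMoment P 1 s u
      - posteriorMean P s u ^ 2 * likelihoodMoment P 0 s u) ∂stdG := by
  rw [overlap]
  congr with u
  linear_combination posteriorMean P s u * posteriorMean_mul_likelihoodMoment_zero hM s u

lemma abs_posteriorMean_le {P : Measure ℝ} [IsFiniteMeasure P] [NeZero P] {M : ℝ}
    (hM : ∀ᵐ x ∂P, |x| ≤ M) (s u : ℝ) : |posteriorMean P s u| ≤ M := by
  have hpos := likelihoodMoment_zero_pos hM s u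
  rw [posteriorMean, abs_div, abs_of_pos hpos, div_le_iff₀ hpos, likelihoodMoment,
    likelihoodMoment, ← integral_const_mul]
  have hint : Integrable (fun x => M * (x ^ 0 * exp (s * x * u - s ^ 2 * x ^ 2 / 2))) P :=
    integrable_of_ae_abs_le hM (by fun_prop)
  refine norm_integral_le_of_norm_le (G := ℝ) hint (hM.mono fun x hx => ?_)
  rw [pow_one, pow_zero, one_mul, norm_mul, norm_eq_abs, norm_eq_abs, abs_exp]
  gcongr

section BoundedEstimator

variable {P0 : Measure ℝ} {M : ℝ}

lemma ae_prod_stdG_abs_fst_le (hM : ∀ᵐ x ∂P0, |x| ≤ M) :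
    ∀ᵐ p ∂P0.prod stdG, |p.1| ≤ M :=
  Measure.quasiMeasurePreserving_fst.ae hM

variable [IsFiniteMeasure P0] {f : ℝ → ℝ} {C : ℝ}

lemma integrable_prod_stdG_channel (hM : ∀ᵐ x ∂P0, |x| ≤ M) (hf : Continuous f)
    (hC : ∀ u, |f u| ≤ C) (k : ℕ) (s : ℝ) :
    Integrable (fun p => p.1 ^ k * f (s * p.1 + p.2)) (P0.prod stdG) := by
  refine .of_bound (Continuous.aestronglyMeasurable (by fun_prop)) (M ^ k * C) ?_
  filter_upwards [ae_prod_stdG_abs_fst_le hM] with p hp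
  have hfp := hC (s * p.1 + p.2)
  have hM0 : 0 ≤ M := (abs_nonneg _).trans hp
  rw [norm_mul, norm_pow, norm_eq_abs, norm_eq_abs]
  gcongr

lemma integral_prod_stdG_channel (hM : ∀ᵐ x ∂P0, |x| ≤ M) (hf : Continuous f)
    (hC : ∀ u, |f u| ≤ C) (k : ℕ) (s : ℝ) :
    ∫ p, p.1 ^ k * f (s * p.1 + p.2) ∂(P0.prod stdG)
      = ∫ u, likelihoodMoment P0 k s u * f u ∂stdG := by
  rw [integral_prod _ (integrable_prod_stdG_channel hM hf hC k s),
    ← integral_channel_eq_integral_likelihoodMoment hM (.of_forall_abs_le hf hC)]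
  simp only [integral_const_mul]

lemma abs_sq_le_sq_of_abs_le {a b : ℝ} (h : |a| ≤ b) : |a ^ 2| ≤ b ^ 2 :=
  (abs_pow a 2).trans_le (pow_le_pow_left₀ (abs_nonneg a) h 2)

lemma integrable_prod_stdG_estimator (hM : ∀ᵐ x ∂P0, |x| ≤ M) (hf : Continuous f)
    (hC : ∀ u, |f u| ≤ C) (s : ℝ) :
    Integrable (fun p => 2 * p.1 * f (s * p.1 + p.2) - f (s * p.1 + p.2) ^ 2)
      (P0.prod stdG) := by
  simpa only [pow_one, pow_zero, one_mul, mul_assoc, Pi.sub_def, Pi.pow_apply] using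
    ((integrable_prod_stdG_channel hM hf hC 1 s).const_mul 2).sub
      (integrable_prod_stdG_channel hM (hf.pow 2) (fun u => abs_sq_le_sq_of_abs_le (hC u)) 0 s)

lemma integral_prod_stdG_estimator (hM : ∀ᵐ x ∂P0, |x| ≤ M) (hf : Continuous f)
    (hC : ∀ u, |f u| ≤ C) (s : ℝ) :
    ∫ p, (2 * p.1 * f (s * p.1 + p.2) - f (s * p.1 + p.2) ^ 2) ∂(P0.prod stdG)
      = ∫ u, (2 * f u * likelihoodMoment P0 1 s u - f u ^ 2 * likelihoodMoment P0 0 s u)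
        ∂stdG := by
  have hC2 (u : ℝ) : |f u ^ 2| ≤ C ^ 2 := abs_sq_le_sq_of_abs_le (hC u)
  have hℓ := expGrowth_likelihoodMoment hM
  have hprod := integral_sub ((integrable_prod_stdG_channel hM hf hC 1 s).const_mul 2)
    (integrable_prod_stdG_channel hM (hf.pow 2) hC2 0 s)
  have hsub := integral_sub
    ((((hℓ 1).mul (.of_forall_abs_le hf hC)).integrable s).const_mul 2)
    (((hℓ 0).mul (.of_forall_abs_le (hf.pow 2) hC2)).integrable s)
  rw [integral_const_mul, integral_prod_stdG_channel hM hf hC,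
    integral_prod_stdG_channel hM (hf.pow 2) hC2, ← integral_const_mul, ← hsub] at hprod
  simpa only [pow_one, pow_zero, mul_one, mul_comm, mul_left_comm, mul_assoc, Pi.pow_apply]
    using hprod

lemma integral_estimator_sparsePrior_div (hM : ∀ᵐ x ∂P0, |x| ≤ M) {ρ : ℝ}
    (hρ : ρ ∈ Set.Ioo (0 : ℝ) 1) (hf : Continuous f) (hC : ∀ u, |f u| ≤ C) (s : ℝ) :
    (∫ u, (2 * f u * likelihoodMoment (sparsePrior ρ P0) 1 s u
        - f u ^ 2 * likelihoodMoment (sparsePrior ρ P0) 0 s u) ∂stdG) / ρ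
      = ∫ p, (2 * p.1 * f (s * p.1 + p.2) - f (s * p.1 + p.2) ^ 2) ∂(P0.prod stdG)
        - (1 - ρ) / ρ * ∫ u, f u ^ 2 ∂stdG := by
  have hfg := ExpGrowth.of_forall_abs_le hf hC
  have hf2 : ExpGrowth fun _ u => f u ^ 2 :=
    .of_forall_abs_le (hf.pow 2) fun u => abs_sq_le_sq_of_abs_le (hC u)
  have hℓ := expGrowth_likelihoodMoment hM
  have hsplit (u : ℝ) : 2 * f u * likelihoodMoment (sparsePrior ρ P0) 1 s u
        - f u ^ 2 * likelihoodMoment (sparsePrior ρ P0) 0 s u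
      = ρ * (2 * f u * likelihoodMoment P0 1 s u - f u ^ 2 * likelihoodMoment P0 0 s u)
        - (1 - ρ) * f u ^ 2 := by
    rw [likelihoodMoment_one_sparsePrior hM hρ, likelihoodMoment_zero_sparsePrior hM hρ]
    ring
  have hint := ((((hfg.mul (hℓ 1)).integrable s).const_mul 2).sub
    ((hf2.mul (hℓ 0)).integrable s)).const_mul ρ
  simp only [← mul_assoc (2 : ℝ), Pi.sub_apply] at hint
  simp only [hsplit]
  rw [integral_sub hint ((hf2.integrable s).const_mul (1 - ρ)), integral_const_mul,
    integral_const_mul, ← integral_prod_stdG_estimator hM hf hC, sub_div,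
    mul_div_cancel_left₀ _ hρ.1.ne', mul_div_right_comm]

end BoundedEstimator

section SparseEstimation

variable {P0 : Measure ℝ} [IsProbabilityMeasure P0] {M ρ : ℝ}

lemma integral_estimator_le_overlap_sparsePrior_div (hM : ∀ᵐ x ∂P0, |x| ≤ M)
    (hρ : ρ ∈ Set.Ioo (0 : ℝ) 1) {f : ℝ → ℝ} (hf : Continuous f) {C : ℝ} (hC : ∀ u, |f u| ≤ C)
    (s : ℝ) :
    ∫ p, (2 * p.1 * f (s * p.1 + p.2) - f (s * p.1 + p.2) ^ 2) ∂(P0.prod stdG)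
        - (∫ u, f u ^ 2 ∂stdG) / ρ
      ≤ overlap (sparsePrior ρ P0) s / ρ := by
  have hle := div_le_div_of_nonneg_right (integral_estimator_le_overlap
    (ae_sparsePrior_abs_le hM hρ) (.of_forall_abs_le hf hC) s) hρ.1.le
  rw [integral_estimator_sparsePrior_div hM hρ hf hC] at hle
  have hsq : 0 ≤ ∫ u, f u ^ 2 ∂stdG := integral_nonneg fun u => sq_nonneg (f u)
  refine le_trans (sub_le_sub_left ?_ _) hle
  rw [div_mul_eq_mul_div]
  exact div_le_div_of_nonneg_right (by nlinarith [mul_nonneg hρ.1.le hsq]) hρ.1.le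

lemma overlap_sparsePrior_div_le_integral (hM : ∀ᵐ x ∂P0, |x| ≤ M)
    (hρ : ρ ∈ Set.Ioo (0 : ℝ) 1) (s : ℝ) :
    overlap (sparsePrior ρ P0) s / ρ
      ≤ ∫ p, (2 * p.1 * posteriorMean (sparsePrior ρ P0) s (s * p.1 + p.2)
        - posteriorMean (sparsePrior ρ P0) s (s * p.1 + p.2) ^ 2) ∂(P0.prod stdG) := by
  have hM' := ae_sparsePrior_abs_le hM hρ
  rw [overlap_eq_integral_posteriorMean hM', integral_estimator_sparsePrior_div hM hρ
    ((expGrowth_posteriorMean hM').continuous s) (abs_posteriorMean_le hM' s)]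
  exact sub_le_self _ (mul_nonneg (div_nonneg (sub_nonneg.2 hρ.2.le) hρ.1.le)
    (integral_nonneg fun u => sq_nonneg _))

end SparseEstimation

section Detection

variable {ι : Type*} {l : Filter ι} {ρ s : ι → ℝ} {S : Set ℝ}

/-- The regime in which, along `l`, the channel `u = s x + z` with sparsity `ρ` reveals the signals
`x` in `S` and hides all others: up to terms of order `s`, the log-likelihood gain `s² x² / 2` of a
signal beats its cost `-log ρ` exactly when `x ∈ S`. -/
structure IsDetectionRegime (l : Filter ι) (ρ s : ι → ℝ) (S : Set ℝ) : Prop where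
  measurableSet : MeasurableSet S
  sparsity_mem : ∀ᶠ i in l, ρ i ∈ Set.Ioo (0 : ℝ) 1
  tendsto_signal : Filter.Tendsto s l Filter.atTop
  above : ∀ x ∈ S, ∀ C,
    Filter.Tendsto (fun i => s i ^ 2 * x ^ 2 / 2 + C * s i + log (ρ i)) l Filter.atTop
  below : ∀ x ∉ S, x ≠ 0 → ∀ C,
    Filter.Tendsto (fun i => s i ^ 2 * x ^ 2 / 2 + C * s i + log (ρ i)) l Filter.atBot

lemma mul_exp_sq_div_two {ρ : ℝ} (hρ : 0 < ρ) (s x z : ℝ) :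
    ρ * exp ((s * x + z) ^ 2 / 2)
      = exp (s ^ 2 * x ^ 2 / 2 + x * z * s + log ρ) * exp (z ^ 2 / 2) := by
  conv_lhs => rw [← exp_log hρ]
  rw [← exp_add, ← exp_add]
  ring_nf

lemma IsDetectionRegime.tendsto_mul_exp_zero (h : IsDetectionRegime l ρ s S) {x : ℝ}
    (hxS : x ∉ S) (hx : x ≠ 0) (z : ℝ) :
    Filter.Tendsto (fun i => ρ i * exp ((s i * x + z) ^ 2 / 2)) l (nhds 0) := by
  have hlim := (tendsto_exp_atBot.comp (h.below x hxS hx (x * z))).mul_const (exp (z ^ 2 / 2))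
  rw [zero_mul] at hlim
  refine hlim.congr' ?_
  filter_upwards [h.sparsity_mem] with i hρ
  exact (mul_exp_sq_div_two hρ.1 _ _ _).symm

lemma sq_add_sq_le_exp_mul {s : ℝ} (hs : 1 ≤ s) (x z : ℝ) :
    s ^ 2 + (s * x + z) ^ 2 ≤ exp (2 * s) * (1 + (|x| + |z|) ^ 2) := by
  have hsum : |s * x + z| ≤ s * (|x| + |z|) := by
    calc |s * x + z| ≤ |s * x| + |z| := abs_add_le _ _
      _ ≤ s * |x| + s * |z| := by
          rw [abs_mul, abs_of_pos (one_pos.trans_le hs)]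
          gcongr
          exact le_mul_of_one_le_left (abs_nonneg z) hs
      _ = s * (|x| + |z|) := by ring
  have hexp : s ^ 2 ≤ exp (2 * s) := by
    rw [two_mul, exp_add, ← sq]
    gcongr
    linarith [add_one_le_exp s]
  calc s ^ 2 + (s * x + z) ^ 2 = s ^ 2 + |s * x + z| ^ 2 := by rw [sq_abs]
    _ ≤ s ^ 2 + (s * (|x| + |z|)) ^ 2 := by gcongr
    _ = s ^ 2 * (1 + (|x| + |z|) ^ 2) := by ring
    _ ≤ exp (2 * s) * (1 + (|x| + |z|) ^ 2) := by gcongr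

lemma IsDetectionRegime.tendsto_mul_exp_div_atTop (h : IsDetectionRegime l ρ s S) {x : ℝ}
    (hxS : x ∈ S) (z : ℝ) :
    Filter.Tendsto (fun i => ρ i * exp ((s i * x + z) ^ 2 / 2) / (s i ^ 2 + (s i * x + z) ^ 2)) l
      Filter.atTop := by
  have hpos : 0 < exp (z ^ 2 / 2) / (1 + (|x| + |z|) ^ 2) := by positivity
  refine Filter.tendsto_atTop_mono' l ?_
    ((tendsto_exp_atTop.comp (h.above x hxS (x * z - 2))).atTop_mul_const hpos)
  filter_upwards [h.sparsity_mem, h.tendsto_signal.eventually_ge_atTop 1] with i hρ hs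
  rw [le_div_iff₀ (by positivity)]
  calc exp (s i ^ 2 * x ^ 2 / 2 + (x * z - 2) * s i + log (ρ i))
        * (exp (z ^ 2 / 2) / (1 + (|x| + |z|) ^ 2)) * (s i ^ 2 + (s i * x + z) ^ 2)
      ≤ exp (s i ^ 2 * x ^ 2 / 2 + (x * z - 2) * s i + log (ρ i))
        * (exp (z ^ 2 / 2) / (1 + (|x| + |z|) ^ 2))
        * (exp (2 * s i) * (1 + (|x| + |z|) ^ 2)) := by
        gcongr
        exact sq_add_sq_le_exp_mul hs x z
    _ = exp (s i ^ 2 * x ^ 2 / 2 + (x * z - 2) * s i + log (ρ i)) * exp (2 * s i)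
        * exp (z ^ 2 / 2) := by
        field_simp
    _ = ρ i * exp ((s i * x + z) ^ 2 / 2) := by
        rw [mul_exp_sq_div_two hρ.1, ← exp_add]
        ring_nf

end Detection

section GatedEstimator

/-- Estimates `x` from `u = s x + z` by `u / s`, clipped to `[-M, M]`, after multiplication by a
gate which suppresses the observations that pure noise explains better than a sparse signal. The
gate mimics the posterior odds of a signal under a Cauchy prior of width one. -/
def gatedEstimator (M ρ s u : ℝ) : ℝ :=
  min 1 (ρ * exp (u ^ 2 / 2) / (s ^ 2 + u ^ 2)) * max (-M) (min M (u / s))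

variable {M ρ s : ℝ}

lemma continuous_gatedEstimator (hs : 0 < s) : Continuous (gatedEstimator M ρ s) := by
  have hden (u : ℝ) : s ^ 2 + u ^ 2 ≠ 0 := by positivity
  unfold gatedEstimator
  fun_prop (disch := assumption)

lemma abs_clip_le (hM : 0 ≤ M) (y : ℝ) : |max (-M) (min M y)| ≤ M :=
  abs_le.2 ⟨le_max_left _ _, max_le (by linarith) (min_le_left _ _)⟩

lemma abs_gate_le_one (hρ : 0 ≤ ρ) (s u : ℝ) :
    |min 1 (ρ * exp (u ^ 2 / 2) / (s ^ 2 + u ^ 2))| ≤ 1 := by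
  rw [abs_of_nonneg (by positivity)]
  exact min_le_left _ _

lemma abs_gatedEstimator_le (hM : 0 ≤ M) (hρ : 0 ≤ ρ) (u : ℝ) : |gatedEstimator M ρ s u| ≤ M := by
  rw [gatedEstimator, abs_mul]
  exact (mul_le_of_le_one_left (abs_nonneg _) (abs_gate_le_one hρ s u)).trans (abs_clip_le hM _)

lemma gatedEstimator_sq_le (hM : 0 ≤ M) (hρ : 0 ≤ ρ) (u : ℝ) :
    gatedEstimator M ρ s u ^ 2 ≤ M ^ 2 * (ρ * exp (u ^ 2 / 2) / (s ^ 2 + u ^ 2)) := by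
  set A := ρ * exp (u ^ 2 / 2) / (s ^ 2 + u ^ 2)
  have hA : 0 ≤ A := by positivity
  have hgate : min 1 A ^ 2 ≤ A :=
    (pow_le_of_le_one (le_min zero_le_one hA) (min_le_left _ _) two_ne_zero).trans
      (min_le_right _ _)
  calc gatedEstimator M ρ s u ^ 2
      = min 1 A ^ 2 * max (-M) (min M (u / s)) ^ 2 := mul_pow _ _ _
    _ ≤ A * M ^ 2 :=
        mul_le_mul hgate (sq_le_sq.2 ((abs_clip_le hM _).trans (le_abs_self M))) (sq_nonneg _) hA
    _ = M ^ 2 * A := mul_comm _ _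

lemma inv_sq_add_sq_eq (hs : 0 < s) (u : ℝ) :
    (s ^ 2 + u ^ 2)⁻¹ = (s ^ 2)⁻¹ * (1 + (u / s) ^ 2)⁻¹ := by
  rw [← mul_inv, mul_add, mul_one, ← mul_pow, mul_div_cancel₀ _ hs.ne']

lemma integrable_inv_sq_add_sq (hs : 0 < s) : Integrable fun u : ℝ => (s ^ 2 + u ^ 2)⁻¹ := by
  simp only [inv_sq_add_sq_eq hs]
  exact (integrable_inv_one_add_sq.comp_div hs.ne').const_mul _

lemma integral_inv_sq_add_sq (hs : 0 < s) : ∫ u : ℝ, (s ^ 2 + u ^ 2)⁻¹ = π / s := by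
  simp only [inv_sq_add_sq_eq hs]
  rw [integral_const_mul, Measure.integral_comp_div (fun y : ℝ => (1 + y ^ 2)⁻¹),
    integral_univ_inv_one_add_sq, abs_of_pos hs, smul_eq_mul]
  field_simp

lemma gaussianPDFReal_mul_exp_sq_div_two (u : ℝ) :
    gaussianPDFReal 0 1 u * exp (u ^ 2 / 2) = (√(2 * π))⁻¹ := by
  rw [gaussianPDFReal, mul_assoc, ← exp_add]
  simp [neg_div]

lemma integral_gatedEstimator_sq_div_le (hM : 0 ≤ M) (hρ : 0 < ρ) (hs : 0 < s) :
    (∫ u, gatedEstimator M ρ s u ^ 2 ∂stdG) / ρ ≤ M ^ 2 * (√(2 * π))⁻¹ * (π / s) := by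
  have hint := (integrable_inv_sq_add_sq hs).const_mul (M ^ 2 * (√(2 * π))⁻¹ * ρ)
  rw [div_le_iff₀ hρ, integral_stdG, ← integral_inv_sq_add_sq hs, mul_right_comm,
    ← integral_const_mul]
  refine integral_mono_of_nonneg (.of_forall fun u => ?_) hint (.of_forall fun u => ?_)
  · exact mul_nonneg (gaussianPDFReal_nonneg 0 1 u) (sq_nonneg _)
  · calc gaussianPDFReal 0 1 u * gatedEstimator M ρ s u ^ 2
        ≤ gaussianPDFReal 0 1 u * (M ^ 2 * (ρ * exp (u ^ 2 / 2) / (s ^ 2 + u ^ 2))) :=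
          mul_le_mul_of_nonneg_left (gatedEstimator_sq_le hM hρ.le u)
            (gaussianPDFReal_nonneg 0 1 u)
      _ = M ^ 2 * (√(2 * π))⁻¹ * ρ * (s ^ 2 + u ^ 2)⁻¹ := by
          rw [← gaussianPDFReal_mul_exp_sq_div_two u]
          ring

lemma tendsto_clip {ι : Type*} {l : Filter ι} {s : ι → ℝ}
    (hs : Filter.Tendsto s l Filter.atTop) {x : ℝ} (hx : |x| ≤ M) (z : ℝ) :
    Filter.Tendsto (fun i => max (-M) (min M ((s i * x + z) / s i))) l (nhds x) := by
  have hdiv : Filter.Tendsto (fun i => (s i * x + z) / s i) l (nhds x) := by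
    have hlim := (hs.const_div_atTop z).const_add x
    rw [add_zero] at hlim
    refine hlim.congr' ?_
    filter_upwards [hs.eventually_gt_atTop 0] with i hi
    field_simp
  have hclip : max (-M) (min M x) = x := by
    rw [min_eq_right (abs_le.1 hx).2, max_eq_right (abs_le.1 hx).1]
  have hcont : Continuous fun y : ℝ => max (-M) (min M y) := by fun_prop
  have hlim := (hcont.tendsto x).comp hdiv
  rwa [hclip] at hlim

variable {ι : Type*} {l : Filter ι} {ρ s : ι → ℝ} {S : Set ℝ}

lemma IsDetectionRegime.tendsto_mul_exp_div_zero (h : IsDetectionRegime l ρ s S) {x : ℝ}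
    (hxS : x ∉ S) (hx : x ≠ 0) (z : ℝ) :
    Filter.Tendsto (fun i => ρ i * exp ((s i * x + z) ^ 2 / 2) / (s i ^ 2 + (s i * x + z) ^ 2)) l
      (nhds 0) := by
  refine squeeze_zero' ?_ ?_ (h.tendsto_mul_exp_zero hxS hx z)
  · filter_upwards [h.sparsity_mem] with i hρ
    have := hρ.1
    positivity
  · filter_upwards [h.sparsity_mem, h.tendsto_signal.eventually_ge_atTop 1] with i hρ hs
    have := hρ.1
    exact div_le_self (by positivity) (by nlinarith [sq_nonneg (s i * x + z)])

lemma IsDetectionRegime.tendsto_gatedEstimator (h : IsDetectionRegime l ρ s S) {x : ℝ}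
    (hx : |x| ≤ M) (z : ℝ) :
    Filter.Tendsto (fun i => gatedEstimator M (ρ i) (s i) (s i * x + z)) l
      (nhds (S.indicator id x)) := by
  have hclip := tendsto_clip h.tendsto_signal hx z
  by_cases hxS : x ∈ S
  · rw [Set.indicator_of_mem hxS]
    refine hclip.congr' ?_
    filter_upwards [(h.tendsto_mul_exp_div_atTop hxS z).eventually_ge_atTop 1] with i hi
    rw [gatedEstimator, min_eq_left hi, one_mul]
  rw [Set.indicator_of_notMem hxS]
  rcases eq_or_ne x 0 with rfl | hx0
  · refine squeeze_zero_norm' ?_ (tendsto_zero_iff_norm_tendsto_zero.1 hclip)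
    filter_upwards [h.sparsity_mem] with i hρ
    rw [gatedEstimator, norm_mul]
    exact mul_le_of_le_one_left (norm_nonneg _) (abs_gate_le_one hρ.1.le _ _)
  · have hgate := ((tendsto_const_nhds (x := (1 : ℝ))).min
      (h.tendsto_mul_exp_div_zero hxS hx0 z)).mul hclip
    rwa [min_eq_right zero_le_one, zero_mul] at hgate

end GatedEstimator

section DetectionLimit

variable {P0 : Measure ℝ} [IsProbabilityMeasure P0] {M : ℝ}

lemma abs_likelihoodMoment_le (hM : ∀ᵐ x ∂P0, |x| ≤ M) (k : ℕ) (s u : ℝ) :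
    |likelihoodMoment P0 k s u| ≤ M ^ k * exp (u ^ 2 / 2) := by
  have hle : ∀ᵐ x ∂P0, ‖x ^ k * exp (s * x * u - s ^ 2 * x ^ 2 / 2)‖ ≤ M ^ k * exp (u ^ 2 / 2) := by
    filter_upwards [hM] with x hx
    have hM0 : 0 ≤ M := (abs_nonneg x).trans hx
    rw [norm_mul, norm_pow, norm_eq_abs, norm_eq_abs, abs_exp]
    gcongr
    nlinarith [sq_nonneg (u - s * x)]
  simpa only [probReal_univ, mul_one] using! norm_integral_le_of_norm_le_const hle

lemma abs_posteriorMean_sparsePrior_le (hM : ∀ᵐ x ∂P0, |x| ≤ M) {ρ : ℝ}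
    (hρ : ρ ∈ Set.Ioo (0 : ℝ) 1) (s u : ℝ) :
    |posteriorMean (sparsePrior ρ P0) s u| ≤ 2 * M * (ρ * exp (u ^ 2 / 2)) := by
  set m := posteriorMean (sparsePrior ρ P0) s u
  have hM' := ae_sparsePrior_abs_le hM hρ
  have hM0 : 0 ≤ M := (abs_nonneg _).trans (abs_posteriorMean_le hM' s u)
  have hℓ0 : 1 - ρ ≤ likelihoodMoment (sparsePrior ρ P0) 0 s u := by
    rw [likelihoodMoment_zero_sparsePrior hM hρ]
    exact le_add_of_nonneg_right (mul_nonneg hρ.1.le (likelihoodMoment_zero_pos hM s u).le)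
  have hnoise : (1 - ρ) * |m| ≤ ρ * (M * exp (u ^ 2 / 2)) :=
    calc (1 - ρ) * |m| ≤ likelihoodMoment (sparsePrior ρ P0) 0 s u * |m| :=
          mul_le_mul_of_nonneg_right hℓ0 (abs_nonneg m)
      _ = |m * likelihoodMoment (sparsePrior ρ P0) 0 s u| := by
          rw [abs_mul, abs_of_pos (likelihoodMoment_zero_pos hM' s u), mul_comm]
      _ = ρ * |likelihoodMoment P0 1 s u| := by
          rw [posteriorMean_mul_likelihoodMoment_zero hM', likelihoodMoment_one_sparsePrior hM hρ,
            abs_mul, abs_of_pos hρ.1]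
      _ ≤ ρ * (M * exp (u ^ 2 / 2)) := by
          have hℓ1 := abs_likelihoodMoment_le hM 1 s u
          rw [pow_one] at hℓ1
          exact mul_le_mul_of_nonneg_left hℓ1 hρ.1.le
  have hsignal : ρ * |m| ≤ ρ * (M * exp (u ^ 2 / 2)) :=
    mul_le_mul_of_nonneg_left ((abs_posteriorMean_le hM' s u).trans
      (le_mul_of_one_le_right hM0 (one_le_exp (by positivity)))) hρ.1.le
  linarith

lemma integral_prod_stdG_fst (f : ℝ → ℝ) : ∫ p, f p.1 ∂(P0.prod stdG) = ∫ x, f x ∂P0 := by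
  rw [integral_fun_fst, probReal_univ, one_smul]

lemma integrable_indicator_sq (hM : ∀ᵐ x ∂P0, |x| ≤ M) {S : Set ℝ} (hS : MeasurableSet S) :
    Integrable (S.indicator fun x => x ^ 2) P0 :=
  (integrable_of_ae_abs_le hM (by fun_prop)).indicator hS

variable {ι : Type*} {l : Filter ι} {ρ s : ι → ℝ} {S : Set ℝ}

lemma IsDetectionRegime.tendsto_posteriorMean (h : IsDetectionRegime l ρ s S)
    (hM : ∀ᵐ x ∂P0, |x| ≤ M) {x : ℝ} (hxS : x ∉ S) (hx : x ≠ 0) (z : ℝ) :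
    Filter.Tendsto (fun i => posteriorMean (sparsePrior (ρ i) P0) (s i) (s i * x + z)) l
      (nhds 0) := by
  have hlim := (h.tendsto_mul_exp_zero hxS hx z).const_mul (2 * M)
  rw [mul_zero] at hlim
  refine squeeze_zero_norm' ?_ hlim
  filter_upwards [h.sparsity_mem] with i hρ
  exact abs_posteriorMean_sparsePrior_le hM hρ _ _

variable [l.IsCountablyGenerated]

lemma IsDetectionRegime.tendsto_integral_gatedEstimator (h : IsDetectionRegime l ρ s S)
    (hM : ∀ᵐ x ∂P0, |x| ≤ M) :
    Filter.Tendsto (fun i => ∫ p, (2 * p.1 * gatedEstimator M (ρ i) (s i) (s i * p.1 + p.2)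
        - gatedEstimator M (ρ i) (s i) (s i * p.1 + p.2) ^ 2) ∂(P0.prod stdG)) l
      (nhds (∫ x, S.indicator (fun x => x ^ 2) x ∂P0)) := by
  obtain ⟨x₀, hx₀⟩ := hM.exists
  have hM0 : 0 ≤ M := (abs_nonneg x₀).trans hx₀
  rw [← integral_prod_stdG_fst]
  refine tendsto_integral_filter_of_dominated_convergence (fun _ => 2 * M * M + M ^ 2) ?_ ?_
    (integrable_const _) ?_
  · filter_upwards [h.tendsto_signal.eventually_gt_atTop 0] with i hs
    have := continuous_gatedEstimator (M := M) (ρ := ρ i) hs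
    exact Continuous.aestronglyMeasurable (by fun_prop)
  · filter_upwards [h.sparsity_mem] with i hρ
    filter_upwards [ae_prod_stdG_abs_fst_le hM] with p hp
    have hest := abs_gatedEstimator_le (s := s i) hM0 hρ.1.le (s i * p.1 + p.2)
    refine (abs_sub _ _).trans (add_le_add ?_ (abs_sq_le_sq_of_abs_le hest))
    rw [abs_mul, abs_mul, abs_two]
    gcongr
  · filter_upwards [ae_prod_stdG_abs_fst_le hM] with p hp
    have hest := h.tendsto_gatedEstimator hp p.2
    convert (hest.const_mul (2 * p.1)).sub (hest.pow 2) using 2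
    by_cases hpS : p.1 ∈ S
    · simp only [Set.indicator_of_mem hpS, id_eq]
      ring
    · simp [Set.indicator_of_notMem hpS]

lemma abs_two_mul_indicator_mul_posteriorMean_le (hM : ∀ᵐ x ∂P0, |x| ≤ M) {ρ : ℝ}
    (hρ : ρ ∈ Set.Ioo (0 : ℝ) 1) (T : Set ℝ) (s : ℝ) :
    ∀ᵐ p ∂P0.prod stdG, ‖2 * T.indicator id p.1 *
      posteriorMean (sparsePrior ρ P0) s (s * p.1 + p.2)‖ ≤ 2 * M * M := by
  filter_upwards [ae_prod_stdG_abs_fst_le hM] with p hp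
  have hM0 : 0 ≤ M := (abs_nonneg _).trans hp
  have hind : |T.indicator id p.1| ≤ M := (norm_indicator_le_norm_self id p.1).trans hp
  have hmean := abs_posteriorMean_le (ae_sparsePrior_abs_le hM hρ) s (s * p.1 + p.2)
  rw [norm_eq_abs, abs_mul, abs_mul, abs_two]
  gcongr

lemma aestronglyMeasurable_two_mul_indicator_mul_posteriorMean (hM : ∀ᵐ x ∂P0, |x| ≤ M) {ρ : ℝ}
    (hρ : ρ ∈ Set.Ioo (0 : ℝ) 1) {T : Set ℝ} (hT : MeasurableSet T) (s : ℝ) :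
    AEStronglyMeasurable (fun p => 2 * T.indicator id p.1 *
      posteriorMean (sparsePrior ρ P0) s (s * p.1 + p.2)) (P0.prod stdG) := by
  have hmean := (expGrowth_posteriorMean (ae_sparsePrior_abs_le hM hρ)).continuous s |>.measurable
  have : Measurable (T.indicator (id : ℝ → ℝ)) := measurable_id.indicator hT
  exact Measurable.aestronglyMeasurable (by fun_prop)

lemma IsDetectionRegime.tendsto_integral_posteriorMean_undetected (h : IsDetectionRegime l ρ s S)
    (hM : ∀ᵐ x ∂P0, |x| ≤ M) :
    Filter.Tendsto (fun i => ∫ p, 2 * Sᶜ.indicator id p.1 *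
        posteriorMean (sparsePrior (ρ i) P0) (s i) (s i * p.1 + p.2) ∂(P0.prod stdG)) l
      (nhds 0) := by
  rw [← integral_zero (ℝ × ℝ) ℝ (μ := P0.prod stdG)]
  refine tendsto_integral_filter_of_dominated_convergence (fun _ => 2 * M * M) ?_ ?_
    (integrable_const _) ?_
  · filter_upwards [h.sparsity_mem] with i hρ
    exact aestronglyMeasurable_two_mul_indicator_mul_posteriorMean hM hρ
      h.measurableSet.compl (s i)
  · filter_upwards [h.sparsity_mem] with i hρ
    exact abs_two_mul_indicator_mul_posteriorMean_le hM hρ Sᶜ (s i)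
  · refine .of_forall fun p => ?_
    by_cases hp : p.1 ∈ S ∨ p.1 = 0
    · have hind : Sᶜ.indicator id p.1 = (0 : ℝ) := by
        rw [Set.indicator_apply_eq_zero]
        exact fun hpS => hp.resolve_left hpS
      simpa only [hind, mul_zero, zero_mul] using tendsto_const_nhds
    · rw [not_or] at hp
      have hlim := (h.tendsto_posteriorMean hM hp.1 hp.2 p.2).const_mul (2 * Sᶜ.indicator id p.1)
      rwa [mul_zero] at hlim

lemma overlap_sparsePrior_div_le_integral_indicator {ρ s : ℝ} (hM : ∀ᵐ x ∂P0, |x| ≤ M)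
    (hρ : ρ ∈ Set.Ioo (0 : ℝ) 1) (hS : MeasurableSet S) :
    overlap (sparsePrior ρ P0) s / ρ ≤ ∫ x, S.indicator (fun x => x ^ 2) x ∂P0
      + ∫ p, 2 * Sᶜ.indicator id p.1 * posteriorMean (sparsePrior ρ P0) s (s * p.1 + p.2)
        ∂(P0.prod stdG) := by
  have hM' := ae_sparsePrior_abs_le hM hρ
  have hdetected : Integrable (fun p => S.indicator (fun x => x ^ 2) p.1) (P0.prod stdG) :=
    (integrable_indicator_sq hM hS).comp_fst stdG
  have hundetected : Integrable (fun p => 2 * Sᶜ.indicator id p.1 *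
      posteriorMean (sparsePrior ρ P0) s (s * p.1 + p.2)) (P0.prod stdG) :=
    .of_bound (aestronglyMeasurable_two_mul_indicator_mul_posteriorMean hM hρ hS.compl s) _
      (abs_two_mul_indicator_mul_posteriorMean_le hM hρ Sᶜ s)
  refine (overlap_sparsePrior_div_le_integral hM hρ s).trans ?_
  rw [← integral_prod_stdG_fst, ← integral_add hdetected hundetected]
  refine integral_mono (integrable_prod_stdG_estimator hM
    ((expGrowth_posteriorMean hM').continuous s) (abs_posteriorMean_le hM' s) s)
    (hdetected.add hundetected) fun p => ?_
  set m := posteriorMean (sparsePrior ρ P0) s (s * p.1 + p.2)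
  by_cases hp : p.1 ∈ S
  · simp only [hp, Set.indicator_of_mem, Set.mem_compl_iff, not_true_eq_false, not_false_eq_true,
      Set.indicator_of_notMem]
    linarith [sq_nonneg (p.1 - m)]
  · simp only [hp, Set.indicator_of_mem, Set.mem_compl_iff, not_false_eq_true,
      Set.indicator_of_notMem, id_eq]
    linarith [sq_nonneg m]

theorem IsDetectionRegime.tendsto_overlap_div (h : IsDetectionRegime l ρ s S)
    (hM : ∀ᵐ x ∂P0, |x| ≤ M) :
    Filter.Tendsto (fun i => overlap (sparsePrior (ρ i) P0) (s i) / ρ i) l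
      (nhds (∫ x, S.indicator (fun x => x ^ 2) x ∂P0)) := by
  obtain ⟨x₀, hx₀⟩ := hM.exists
  have hM0 : 0 ≤ M := (abs_nonneg x₀).trans hx₀
  have hpenalty : Filter.Tendsto (fun i => M ^ 2 * (√(2 * π))⁻¹ * (π / s i)) l (nhds 0) := by
    simpa only [mul_zero] using (h.tendsto_signal.const_div_atTop π).const_mul _
  have hlower := (h.tendsto_integral_gatedEstimator hM).sub hpenalty
  have hupper := (h.tendsto_integral_posteriorMean_undetected hM).const_add
    (∫ x, S.indicator (fun x => x ^ 2) x ∂P0)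
  rw [sub_zero] at hlower
  rw [add_zero] at hupper
  refine tendsto_of_tendsto_of_tendsto_of_le_of_le' hlower hupper ?_ ?_
  · filter_upwards [h.sparsity_mem, h.tendsto_signal.eventually_gt_atTop 0] with i hρ hs
    exact (sub_le_sub_left (integral_gatedEstimator_sq_div_le hM0 hρ.1 hs) _).trans
      (integral_estimator_le_overlap_sparsePrior_div hM hρ (continuous_gatedEstimator hs)
        (abs_gatedEstimator_le hM0 hρ.1.le) (s i))
  · filter_upwards [h.sparsity_mem] with i hρ
    exact overlap_sparsePrior_div_le_integral_indicator hM hρ h.measurableSet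

end DetectionLimit

section Threshold

lemma tendsto_quartic_atTop {a b C D : ℝ} (hab : 0 < a ∨ a = 0 ∧ 0 < b) {f : ℝ → ℝ}
    (hf : ∀ᶠ t in Filter.atTop, |f t| ≤ D * t ^ 2) :
    Filter.Tendsto (fun t => a * t ^ 4 + b * t ^ 3 + C * f t) Filter.atTop Filter.atTop := by
  have hlin : Filter.Tendsto (fun t : ℝ => t * (a * t + b)) Filter.atTop Filter.atTop := by
    rcases hab with ha | ⟨rfl, hb⟩
    · exact Filter.tendsto_id.atTop_mul_atTop₀
        (Filter.tendsto_atTop_add_const_right _ _ (Filter.tendsto_id.const_mul_atTop ha))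
    · simpa only [zero_mul, zero_add, id_eq] using Filter.tendsto_id.atTop_mul_const hb
  have hpoly : Filter.Tendsto (fun t : ℝ => t ^ 2 * (t * (a * t + b) + -(|C| * D))) Filter.atTop
      Filter.atTop :=
    (Filter.tendsto_pow_atTop two_ne_zero).atTop_mul_atTop₀
      (Filter.tendsto_atTop_add_const_right _ _ hlin)
  refine Filter.tendsto_atTop_mono' _ (hf.mono fun t ht => ?_) hpoly
  have hCf : -(C * f t) ≤ |C| * (D * t ^ 2) :=
    (neg_le_abs _).trans (by rw [abs_mul]; gcongr)
  linarith

/-- The channel amplitude `√((α(ρ) / ρ) r)` at the threshold `r = 2 (1 + e / t) / (γ v²)`, as a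
function of `t = |ln ρ| ^ (1/4)`. -/
def thresholdSignal (e v t : ℝ) : ℝ := √(2 * (t ^ 4 + e * t ^ 3) / v ^ 2)

variable {e v : ℝ}

lemma eventually_thresholdSignal_sq (e v : ℝ) :
    ∀ᶠ t in Filter.atTop, thresholdSignal e v t ^ 2 = 2 * (t ^ 4 + e * t ^ 3) / v ^ 2 := by
  filter_upwards [Filter.eventually_ge_atTop 0, Filter.eventually_ge_atTop (-e)] with t ht hte
  have hfactor : t ^ 4 + e * t ^ 3 = t ^ 3 * (t + e) := by ring
  have : 0 ≤ t + e := by linarith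
  rw [thresholdSignal, hfactor, sq_sqrt (by positivity)]

lemma eventually_abs_thresholdSignal_le (e : ℝ) (hv : 0 < v) :
    ∀ᶠ t in Filter.atTop, |thresholdSignal e v t| ≤ 2 / v * t ^ 2 := by
  filter_upwards [eventually_thresholdSignal_sq e v, Filter.eventually_ge_atTop 0,
    Filter.eventually_ge_atTop e] with t hsq ht hte
  refine abs_le_of_sq_le_sq ?_ (by positivity)
  rw [hsq, mul_pow, div_pow, div_mul_eq_mul_div]
  refine div_le_div_of_nonneg_right ?_ (sq_nonneg v)
  linarith [mul_le_mul_of_nonneg_right hte (pow_nonneg ht 3)]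

lemma tendsto_thresholdSignal (e : ℝ) (hv : 0 < v) :
    Filter.Tendsto (thresholdSignal e v) Filter.atTop Filter.atTop := by
  have hpos : 0 < 2 / v ^ 2 := by positivity
  refine tendsto_sqrt_atTop.comp ((tendsto_quartic_atTop (a := 2 / v ^ 2) (b := 2 / v ^ 2 * e)
    (C := 0) (D := 0) (f := 0) (.inl hpos) (by simp)).congr fun t => ?_)
  rw [zero_mul]
  ring

lemma isDetectionRegime_thresholdSignal (hv : 0 < v) {S : Set ℝ} (hS : MeasurableSet S)
    (habove : ∀ x ∈ S, v < |x| ∨ |x| = v ∧ 0 < e) (hbelow : ∀ x ∉ S, |x| < v ∨ |x| = v ∧ e < 0) :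
    IsDetectionRegime Filter.atTop (fun t => exp (-t ^ 4)) (thresholdSignal e v) S where
  measurableSet := hS
  sparsity_mem := by
    filter_upwards [Filter.eventually_gt_atTop 0] with t ht
    exact ⟨exp_pos _, exp_lt_one_iff.2 (neg_neg_of_pos (by positivity))⟩
  tendsto_signal := tendsto_thresholdSignal e hv
  above x hx C := by
    have hab : 0 < x ^ 2 / v ^ 2 - 1 ∨ x ^ 2 / v ^ 2 - 1 = 0 ∧ 0 < x ^ 2 / v ^ 2 * e := by
      rw [← sq_abs x, ← div_pow]
      rcases habove x hx with hlt | ⟨heq, he⟩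
      · exact .inl (sub_pos.2 (one_lt_pow₀ ((one_lt_div hv).2 hlt) two_ne_zero))
      · rw [heq, div_self hv.ne', one_pow, one_mul]
        exact .inr ⟨sub_self 1, he⟩
    refine (tendsto_quartic_atTop (C := C) hab (eventually_abs_thresholdSignal_le e hv)).congr' ?_
    filter_upwards [eventually_thresholdSignal_sq e v] with t hsq
    rw [hsq, log_exp]
    ring
  below x hx _ C := by
    have hab : 0 < 1 - x ^ 2 / v ^ 2 ∨ 1 - x ^ 2 / v ^ 2 = 0 ∧ 0 < -(x ^ 2 / v ^ 2 * e) := by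
      rw [← sq_abs x, ← div_pow]
      rcases hbelow x hx with hlt | ⟨heq, he⟩
      · exact .inl (sub_pos.2 (pow_lt_one₀ (by positivity) ((div_lt_one hv).2 hlt) two_ne_zero))
      · rw [heq, div_self hv.ne', one_pow, one_mul]
        exact .inr ⟨sub_self 1, neg_pos.2 he⟩
    rw [← Filter.tendsto_neg_atTop_iff]
    refine (tendsto_quartic_atTop (C := -C) hab (eventually_abs_thresholdSignal_le e hv)).congr' ?_
    filter_upwards [eventually_thresholdSignal_sq e v] with t hsq
    rw [hsq, log_exp]
    ring

/-- The endpoints `2 (1 ± |ln ρ| ^ (-1/4)) / (γ v²)`, for `e = ± 1`, of the window in which the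
maximizer is located. -/
def threshold (γ e v ρ : ℝ) : ℝ := 2 * (1 + e * |log ρ| ^ (-(1 : ℝ) / 4)) / (γ * v ^ 2)

lemma abs_log_rpow_neg (ρ : ℝ) : |log ρ| ^ (-(1 : ℝ) / 4) = (|log ρ| ^ ((1 : ℝ) / 4))⁻¹ := by
  rw [← rpow_neg (abs_nonneg _), neg_div]

lemma abs_log_rpow_pow_four (ρ : ℝ) : (|log ρ| ^ ((1 : ℝ) / 4)) ^ 4 = |log ρ| := by
  rw [← rpow_mul_natCast (abs_nonneg _)]
  norm_num

lemma abs_log_rpow_pos {ρ : ℝ} (hρ : ρ ∈ Set.Ioo (0 : ℝ) 1) (a : ℝ) : 0 < |log ρ| ^ a :=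
  rpow_pos_of_pos (abs_pos.2 (log_neg hρ.1 hρ.2).ne) a

lemma sqrt_threshold {γ ρ : ℝ} (hγ : γ ≠ 0) (hρ : ρ ∈ Set.Ioo (0 : ℝ) 1) (e v : ℝ) :
    √(γ * |log ρ| * threshold γ e v ρ) = thresholdSignal e v (|log ρ| ^ ((1 : ℝ) / 4)) := by
  have hpos := (abs_log_rpow_pos hρ (1 / 4)).ne'
  rw [thresholdSignal, threshold, abs_log_rpow_neg]
  nth_rw 1 [← abs_log_rpow_pow_four ρ]
  congr 1
  field_simp

lemma exp_neg_abs_log_rpow {ρ : ℝ} (hρ : ρ ∈ Set.Ioo (0 : ℝ) 1) :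
    exp (-(|log ρ| ^ ((1 : ℝ) / 4)) ^ 4) = ρ := by
  rw [abs_log_rpow_pow_four, abs_of_neg (log_neg hρ.1 hρ.2), neg_neg, exp_log hρ.1]

lemma tendsto_abs_log_rpow_nhdsGT_zero {a : ℝ} (ha : 0 < a) :
    Filter.Tendsto (fun ρ : ℝ => |log ρ| ^ a) (nhdsWithin 0 (Set.Ioi 0)) Filter.atTop :=
  (tendsto_rpow_atTop ha).comp (Filter.tendsto_abs_atBot_atTop.comp tendsto_log_nhdsGT_zero)

lemma tendsto_threshold (γ e v : ℝ) :
    Filter.Tendsto (threshold γ e v) (nhdsWithin 0 (Set.Ioi 0)) (nhds (2 / (γ * v ^ 2))) := by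
  have hlim := (tendsto_abs_log_rpow_nhdsGT_zero (a := 1 / 4) (by norm_num)).inv_tendsto_atTop
  simp only [Pi.inv_def, ← abs_log_rpow_neg] at hlim
  simpa only [mul_zero, add_zero, mul_one] using!
    (((hlim.const_mul e).const_add 1).const_mul 2).div_const (γ * v ^ 2)

lemma eventually_threshold_lt_threshold {γ w : ℝ} (hγ : 0 < γ) (hv : 0 < v) (hvw : v < w)
    (e e' : ℝ) :
    ∀ᶠ ρ in nhdsWithin 0 (Set.Ioi 0), threshold γ e w ρ < threshold γ e' v ρ := by
  refine (tendsto_threshold γ e w).eventually_lt (tendsto_threshold γ e' v) ?_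
  gcongr

lemma threshold_pos {γ ρ : ℝ} (hγ : 0 < γ) (hv : v ≠ 0)
    (h : 0 < 1 + e * |log ρ| ^ (-(1 : ℝ) / 4)) : 0 < threshold γ e v ρ := by
  rw [threshold]
  positivity

lemma threshold_lt_threshold {γ e' ρ : ℝ} (hγ : 0 < γ) (hv : v ≠ 0) (hρ : ρ ∈ Set.Ioo (0 : ℝ) 1)
    (he : e < e') : threshold γ e v ρ < threshold γ e' v ρ := by
  have := abs_log_rpow_pos hρ (-1 / 4)
  rw [threshold, threshold]
  gcongr

lemma abs_log_rpow_neg_lt_one {ρ : ℝ} (hρ : ρ ∈ Set.Ioo (0 : ℝ) (exp (-1))) :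
    |log ρ| ^ (-(1 : ℝ) / 4) < 1 := by
  have hlog : log ρ < -1 := (log_lt_iff_lt_exp hρ.1).2 hρ.2
  refine rpow_lt_one_of_one_lt_of_neg ?_ (by norm_num)
  rw [abs_of_neg (by linarith)]
  linarith

lemma tendsto_overlap_threshold {P0 : Measure ℝ} [IsProbabilityMeasure P0] {M γ : ℝ}
    (hM : ∀ᵐ x ∂P0, |x| ≤ M) (hγ : γ ≠ 0) (hv : 0 < v) {S : Set ℝ} (hS : MeasurableSet S)
    (habove : ∀ x ∈ S, v < |x| ∨ |x| = v ∧ 0 < e) (hbelow : ∀ x ∉ S, |x| < v ∨ |x| = v ∧ e < 0) :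
    Filter.Tendsto (fun ρ => overlap (sparsePrior ρ P0) (√(γ * |log ρ| * threshold γ e v ρ)) / ρ)
      (nhdsWithin 0 (Set.Ioi 0)) (nhds (∫ x, S.indicator (fun x => x ^ 2) x ∂P0)) := by
  refine (((isDetectionRegime_thresholdSignal hv hS habove hbelow).tendsto_overlap_div hM).comp
    (tendsto_abs_log_rpow_nhdsGT_zero (a := 1 / 4) (by norm_num))).congr' ?_
  filter_upwards [Ioo_mem_nhdsGT one_pos] with ρ hρ
  simp only [Function.comp_apply, sqrt_threshold hγ hρ, exp_neg_abs_log_rpow hρ]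

end Threshold

section StrictMax

variable {f : ℝ → ℝ} {r : ℝ}

lemma lt_of_hasDerivAt_sub_strictMonoOn {g : ℝ → ℝ} (hf : ContinuousOn f (Set.Ici 0))
    (hderiv : ∀ t, 0 < t → HasDerivAt f ((g r - g t) / 2) t) (hg : StrictMonoOn g (Set.Ici 0))
    (hr : 0 < r) {t : ℝ} (ht : 0 ≤ t) (hne : t ≠ r) : f t < f r := by
  rcases hne.lt_or_gt with hlt | hgt
  · refine strictMonoOn_of_deriv_pos (convex_Icc 0 r) (hf.mono Set.Icc_subset_Ici_self)
      (fun u hu => ?_) ⟨ht, hlt.le⟩ ⟨hr.le, le_rfl⟩ hlt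
    rw [interior_Icc] at hu
    rw [(hderiv u hu.1).deriv]
    exact half_pos (sub_pos.2 (hg hu.1.le hr.le hu.2))
  · refine strictAntiOn_of_deriv_neg (convex_Ici r) (hf.mono (Set.Ici_subset_Ici.2 hr.le))
      (fun u hu => ?_) Set.self_mem_Ici hgt.le hgt
    rw [interior_Ici] at hu
    rw [(hderiv u (hr.trans hu)).deriv]
    exact div_neg_of_neg_of_pos (sub_neg.2 (hg hr.le (hr.trans hu).le hu)) two_pos

lemma eq_ciSup_iff_of_forall_ne_lt {ι : Type*} {f : ι → ℝ} {i : ι} (h : ∀ j ≠ i, f j < f i)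
    (j : ι) : f j = ⨆ k, f k ↔ j = i := by
  have hle (k : ι) : f k ≤ f i := by
    rcases eq_or_ne k i with rfl | hk
    exacts [le_rfl, (h k hk).le]
  have : Nonempty ι := ⟨i⟩
  have hmax : ⨆ k, f k = f i :=
    le_antisymm (ciSup_le hle) (le_ciSup ⟨f i, Set.forall_mem_range.2 hle⟩ i)
  rw [hmax]
  exact ⟨fun hj => by_contra fun hne => (h j hne).ne hj, fun hj => hj ▸ rfl⟩

end StrictMax

/-- The function `r ↦ (2 / ρ) ψ_ρ'((α(ρ) / ρ) r)` in closed form; unlike `gD`, which is built from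
`deriv`, it is also the right quantity at `r = 0`. -/
def scaledOverlap (P0 : Measure ℝ) (γ ρ r : ℝ) : ℝ :=
  overlap (sparsePrior ρ P0) (√(γ * |log ρ| * r)) / ρ

section Variational

variable {P0 : Measure ℝ} [IsProbabilityMeasure P0] {M γ ρ : ℝ}

lemma continuous_scaledOverlap (hM : ∀ᵐ x ∂P0, |x| ≤ M) (hρ : ρ ∈ Set.Ioo (0 : ℝ) 1) (γ : ℝ) :
    Continuous (scaledOverlap P0 γ ρ) := by
  have := continuous_overlap (ae_sparsePrior_abs_le hM hρ)
  unfold scaledOverlap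
  fun_prop

lemma scaledOverlap_zero (hM : ∀ᵐ x ∂P0, |x| ≤ M) (hρ : ρ ∈ Set.Ioo (0 : ℝ) 1) (γ : ℝ) :
    scaledOverlap P0 γ ρ 0 = ρ * meanP P0 ^ 2 := by
  rw [scaledOverlap, mul_zero, sqrt_zero, overlap_sparsePrior_zero_div hM hρ]

lemma mul_abs_log_pos (hγ : 0 < γ) (hρ : ρ ∈ Set.Ioo (0 : ℝ) 1) : 0 < γ * |log ρ| :=
  mul_pos hγ (abs_pos.2 (log_neg hρ.1 hρ.2).ne)

lemma hasDerivAt_psiD (hM : ∀ᵐ x ∂P0, |x| ≤ M) (hρ : ρ ∈ Set.Ioo (0 : ℝ) 1) {r : ℝ} (hr : 0 < r) :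
    HasDerivAt (psiD P0 ρ) (overlap (sparsePrior ρ P0) (√r) / 2) r := by
  have := sqrt_pos.2 hr
  refine (((hasDerivAt_freeEnergy (ae_sparsePrior_abs_le hM hρ) (√r)).comp r
    (hasDerivAt_sqrt hr.ne')).congr_of_eventuallyEq ?_).congr_deriv ?_
  · filter_upwards [lt_mem_nhds hr] with t ht using psiD_eq_freeEnergy hM hρ ht.le
  · field_simp

lemma gD_eq_scaledOverlap (hM : ∀ᵐ x ∂P0, |x| ≤ M) (hγ : 0 < γ) (hρ : ρ ∈ Set.Ioo (0 : ℝ) 1)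
    {r : ℝ} (hr : 0 < r) : gD P0 γ ρ r = scaledOverlap P0 γ ρ r := by
  rw [gD, (hasDerivAt_psiD hM hρ (mul_pos (mul_abs_log_pos hγ hρ) hr)).deriv, scaledOverlap]
  ring

lemma strictMonoOn_scaledOverlap (hM : ∀ᵐ x ∂P0, |x| ≤ M) (hP0 : ¬ ∀ᵐ x ∂P0, x = 0) (hγ : 0 < γ)
    (hρ : ρ ∈ Set.Ioo (0 : ℝ) 1) : StrictMonoOn (scaledOverlap P0 γ ρ) (Set.Ici 0) := by
  intro r hr r' _ hlt
  have hL := mul_abs_log_pos hγ hρ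
  exact div_lt_div_of_pos_right (strictMonoOn_overlap (ae_sparsePrior_abs_le hM hρ)
    (not_ae_sparsePrior_eq hP0 hρ) (sqrt_nonneg _) (sqrt_nonneg _)
    (sqrt_lt_sqrt (mul_nonneg hL.le hr) (mul_lt_mul_of_pos_left hlt hL))) hρ.1

lemma isDetectionRegime_fixed_sparsity (hρ : ρ ∈ Set.Ioo (0 : ℝ) 1) :
    IsDetectionRegime Filter.atTop (fun _ => ρ) id {0}ᶜ where
  measurableSet := (measurableSet_singleton 0).compl
  sparsity_mem := .of_forall fun _ => hρ
  tendsto_signal := Filter.tendsto_id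
  above x hx C := by
    have hx2 : 0 < x ^ 2 / 2 := half_pos (sq_pos_of_ne_zero hx)
    refine Filter.tendsto_atTop_add_const_right _ _ ((Filter.tendsto_id.atTop_mul_atTop₀
      (Filter.tendsto_atTop_add_const_right _ C
        (Filter.tendsto_id.atTop_mul_const hx2))).congr fun s => ?_)
    simp only [id_eq]
    ring
  below x hx hx0 := absurd hx0 (not_not.2 (by simpa using hx))

lemma tendsto_scaledOverlap_atTop (hM : ∀ᵐ x ∂P0, |x| ≤ M) (hγ : 0 < γ)
    (hρ : ρ ∈ Set.Ioo (0 : ℝ) 1) :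
    Filter.Tendsto (scaledOverlap P0 γ ρ) Filter.atTop (nhds (secondMoment P0)) := by
  have hind : ({0}ᶜ : Set ℝ).indicator (fun x => x ^ 2) = fun x => x ^ 2 :=
    Set.indicator_eq_self.2 fun x hx h0 => hx (by simp [Set.mem_singleton_iff.1 h0])
  have hlim := (isDetectionRegime_fixed_sparsity hρ).tendsto_overlap_div hM
  rw [hind] at hlim
  exact hlim.comp (tendsto_sqrt_atTop.comp
    (Filter.tendsto_id.const_mul_atTop (mul_abs_log_pos hγ hρ)))

lemma scaledOverlap_lt_secondMoment (hM : ∀ᵐ x ∂P0, |x| ≤ M) (hP0 : ¬ ∀ᵐ x ∂P0, x = 0)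
    (hγ : 0 < γ) (hρ : ρ ∈ Set.Ioo (0 : ℝ) 1) {r : ℝ} (hr : 0 ≤ r) :
    scaledOverlap P0 γ ρ r < secondMoment P0 := by
  have hmono := strictMonoOn_scaledOverlap hM hP0 hγ hρ
  have hr1 : 0 ≤ r + 1 := by linarith
  refine (hmono hr hr1 (lt_add_one r)).trans_le
    (ge_of_tendsto (tendsto_scaledOverlap_atTop hM hγ hρ) ?_)
  filter_upwards [Filter.eventually_ge_atTop (r + 1)] with t ht
  exact hmono.monotoneOn hr1 (hr1.trans ht) ht

lemma hasDerivAt_fD (hM : ∀ᵐ x ∂P0, |x| ≤ M) (hγ : 0 < γ) (hρ : ρ ∈ Set.Ioo (0 : ℝ) 1) (q : ℝ)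
    {r : ℝ} (hr : 0 < r) : HasDerivAt (fD P0 γ ρ q) ((q - scaledOverlap P0 γ ρ r) / 2) r := by
  have hL := mul_abs_log_pos hγ hρ
  have hlog : |log ρ| ≠ 0 := right_ne_zero_of_mul hL.ne'
  have hρ0 := hρ.1.ne'
  have hψ := (hasDerivAt_psiD hM hρ (mul_pos hL hr)).comp r
    ((hasDerivAt_id r).const_mul (γ * |log ρ|))
  refine ((((hasDerivAt_id r).mul_const q).div_const 2).sub
    (hψ.div_const (γ * ρ * |log ρ|))).congr_deriv ?_
  rw [scaledOverlap]
  field_simp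

lemma continuousOn_fD (hM : ∀ᵐ x ∂P0, |x| ≤ M) (hγ : 0 < γ) (hρ : ρ ∈ Set.Ioo (0 : ℝ) 1) (q : ℝ) :
    ContinuousOn (fD P0 γ ρ q) (Set.Ici 0) := by
  have hfree : Continuous (freeEnergy (sparsePrior ρ P0)) := continuous_iff_continuousAt.2
    fun s => (hasDerivAt_freeEnergy (ae_sparsePrior_abs_le hM hρ) s).continuousAt
  have hcont : Continuous fun r => r * q / 2 -
      freeEnergy (sparsePrior ρ P0) (√(γ * |log ρ| * r)) / (γ * ρ * |log ρ|) := by fun_prop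
  refine hcont.continuousOn.congr fun r hr => ?_
  rw [fD, psiD_eq_freeEnergy hM hρ (mul_nonneg (mul_abs_log_pos hγ hρ).le hr)]

lemma fD_scaledOverlap_eq_iSup_iff (hM : ∀ᵐ x ∂P0, |x| ≤ M) (hP0 : ¬ ∀ᵐ x ∂P0, x = 0)
    (hγ : 0 < γ) (hρ : ρ ∈ Set.Ioo (0 : ℝ) 1) {r t : ℝ} (hr : 0 < r) (ht : 0 ≤ t) :
    fD P0 γ ρ (scaledOverlap P0 γ ρ r) t
        = (⨆ r' : Set.Ici (0 : ℝ), fD P0 γ ρ (scaledOverlap P0 γ ρ r) r') ↔ t = r := by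
  have hlt : ∀ j ≠ (⟨r, hr.le⟩ : Set.Ici (0 : ℝ)), fD P0 γ ρ (scaledOverlap P0 γ ρ r) j
      < fD P0 γ ρ (scaledOverlap P0 γ ρ r) r := fun j hj =>
    lt_of_hasDerivAt_sub_strictMonoOn (continuousOn_fD hM hγ hρ _)
      (fun _ hu => hasDerivAt_fD hM hγ hρ _ hu) (strictMonoOn_scaledOverlap hM hP0 hγ hρ) hr j.2
      fun h => hj (Subtype.ext h)
  exact (eq_ciSup_iff_of_forall_ne_lt (f := fun j : Set.Ici (0 : ℝ) =>
    fD P0 γ ρ (scaledOverlap P0 γ ρ r) j) hlt ⟨t, ht⟩).trans Subtype.ext_iff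

theorem existsUnique_maximizer (hM : ∀ᵐ x ∂P0, |x| ≤ M) (hP0 : ¬ ∀ᵐ x ∂P0, x = 0)
    (hγ : 0 < γ) (hρ : ρ ∈ Set.Ioo (0 : ℝ) 1) {q : ℝ}
    (hq : q ∈ Set.Ioo (ρ * meanP P0 ^ 2) (secondMoment P0)) :
    ∃! r : ℝ, 0 < r ∧ fD P0 γ ρ q r = ⨆ r' : Set.Ici (0 : ℝ), fD P0 γ ρ q (r' : ℝ) := by
  obtain ⟨R, hqR, hR⟩ := (((tendsto_scaledOverlap_atTop hM hγ hρ).eventually_const_lt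
    hq.2).and (Filter.eventually_ge_atTop 0)).exists
  rw [← scaledOverlap_zero hM hρ γ] at hq
  obtain ⟨r, hr, rfl⟩ := intermediate_value_Ioo hR
    (continuous_scaledOverlap hM hρ γ).continuousOn ⟨hq.1, hqR⟩
  exact ⟨r, ⟨hr.1, (fD_scaledOverlap_eq_iSup_iff hM hP0 hγ hρ hr.1 hr.1.le).2 rfl⟩,
    fun t ht => (fD_scaledOverlap_eq_iSup_iff hM hP0 hγ hρ hr.1 ht.1.le).1 ht.2⟩

theorem maximizer_mem_Icc (hM : ∀ᵐ x ∂P0, |x| ≤ M) (hP0 : ¬ ∀ᵐ x ∂P0, x = 0) (hγ : 0 < γ)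
    (hρ : ρ ∈ Set.Ioo (0 : ℝ) 1) {r₁ r₂ q r : ℝ} (hr₁ : 0 < r₁) (hr₁₂ : r₁ ≤ r₂)
    (hq : q ∈ Set.Icc (scaledOverlap P0 γ ρ r₁) (scaledOverlap P0 γ ρ r₂)) (hr : 0 ≤ r)
    (hmax : fD P0 γ ρ q r = ⨆ r' : Set.Ici (0 : ℝ), fD P0 γ ρ q (r' : ℝ)) :
    r ∈ Set.Icc r₁ r₂ := by
  obtain ⟨t, ht, rfl⟩ := intermediate_value_Icc hr₁₂
    (continuous_scaledOverlap hM hρ γ).continuousOn hq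
  rwa [(fD_scaledOverlap_eq_iSup_iff hM hP0 hγ hρ (hr₁.trans_le ht.1) hr).1 hmax]

end Variational

section Window

lemma threshold_neg_one (γ v ρ : ℝ) :
    threshold γ (-1) v ρ = 2 * (1 - |log ρ| ^ (-(1 : ℝ) / 4)) / (γ * v ^ 2) := by
  rw [threshold, neg_one_mul, ← sub_eq_add_neg]

lemma threshold_one (γ v ρ : ℝ) :
    threshold γ 1 v ρ = 2 * (1 + |log ρ| ^ (-(1 : ℝ) / 4)) / (γ * v ^ 2) := by
  rw [threshold, one_mul]

lemma mem_Ioo_zero_one_of_lt_exp_neg_one {ρ : ℝ} (hρ : ρ ∈ Set.Ioo (0 : ℝ) (exp (-1))) :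
    ρ ∈ Set.Ioo (0 : ℝ) 1 :=
  ⟨hρ.1, hρ.2.trans (exp_lt_one_iff.2 neg_one_lt_zero)⟩

variable {γ v ρ : ℝ}

lemma threshold_neg_one_pos (hγ : 0 < γ) (hv : 0 < v) (hρ : ρ ∈ Set.Ioo (0 : ℝ) (exp (-1))) :
    0 < threshold γ (-1) v ρ :=
  threshold_pos hγ hv.ne' (by linarith [abs_log_rpow_neg_lt_one hρ])

lemma threshold_one_pos (hγ : 0 < γ) (hv : 0 < v) (ρ : ℝ) : 0 < threshold γ 1 v ρ :=
  threshold_pos hγ hv.ne' (by positivity)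

variable {P0 : Measure ℝ} [IsProbabilityMeasure P0] {M : ℝ}

lemma aD_eq_scaledOverlap (hM : ∀ᵐ x ∂P0, |x| ≤ M) (hγ : 0 < γ) (hv : 0 < v)
    (hρ : ρ ∈ Set.Ioo (0 : ℝ) (exp (-1))) :
    aD P0 γ ρ v = scaledOverlap P0 γ ρ (threshold γ (-1) v ρ) := by
  rw [aD, ← threshold_neg_one, gD_eq_scaledOverlap hM hγ (mem_Ioo_zero_one_of_lt_exp_neg_one hρ)
    (threshold_neg_one_pos hγ hv hρ)]

lemma bD_eq_scaledOverlap (hM : ∀ᵐ x ∂P0, |x| ≤ M) (hγ : 0 < γ) (hv : 0 < v)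
    (hρ : ρ ∈ Set.Ioo (0 : ℝ) 1) :
    bD P0 γ ρ v = scaledOverlap P0 γ ρ (threshold γ 1 v ρ) := by
  rw [bD, ← threshold_one, gD_eq_scaledOverlap hM hγ hρ (threshold_one_pos hγ hv ρ)]

lemma eventually_mem_Ioo_exp_neg_one :
    ∀ᶠ ρ in nhdsWithin 0 (Set.Ioi 0), ρ ∈ Set.Ioo (0 : ℝ) (exp (-1)) :=
  Ioo_mem_nhdsGT (exp_pos _)

theorem tendsto_aD (hM : ∀ᵐ x ∂P0, |x| ≤ M) (hγ : 0 < γ) (hv : 0 < v) :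
    Filter.Tendsto (fun ρ => aD P0 γ ρ v) (nhdsWithin 0 (Set.Ioi 0)) (nhds (truncSMgt P0 v)) := by
  have hS : MeasurableSet {x : ℝ | v < |x|} := measurableSet_lt measurable_const (by fun_prop)
  refine (tendsto_overlap_threshold (e := -1) hM hγ.ne' hv hS (fun x hx => .inl hx)
    fun x hx => ?_).congr' ?_
  · exact (not_lt.1 hx).lt_or_eq.imp_right fun heq => ⟨heq, neg_one_lt_zero⟩
  · filter_upwards [eventually_mem_Ioo_exp_neg_one] with ρ hρ
    rw [aD_eq_scaledOverlap hM hγ hv hρ, scaledOverlap]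

theorem tendsto_bD (hM : ∀ᵐ x ∂P0, |x| ≤ M) (hγ : 0 < γ) (hv : 0 < v) :
    Filter.Tendsto (fun ρ => bD P0 γ ρ v) (nhdsWithin 0 (Set.Ioi 0)) (nhds (truncSMge P0 v)) := by
  have hS : MeasurableSet {x : ℝ | v ≤ |x|} := measurableSet_le measurable_const (by fun_prop)
  refine (tendsto_overlap_threshold (e := 1) hM hγ.ne' hv hS (fun x hx => ?_)
    fun x hx => .inl (not_le.1 hx)).congr' ?_
  · exact (LE.le.lt_or_eq hx).imp_right fun heq => ⟨heq.symm, one_pos⟩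
  · filter_upwards [Ioo_mem_nhdsGT one_pos] with ρ hρ
    rw [bD_eq_scaledOverlap hM hγ hv hρ, scaledOverlap]

lemma mul_meanP_sq_lt_aD (hM : ∀ᵐ x ∂P0, |x| ≤ M) (hP0 : ¬ ∀ᵐ x ∂P0, x = 0) (hγ : 0 < γ)
    (hv : 0 < v) (hρ : ρ ∈ Set.Ioo (0 : ℝ) (exp (-1))) : ρ * meanP P0 ^ 2 < aD P0 γ ρ v := by
  have hρ1 := mem_Ioo_zero_one_of_lt_exp_neg_one hρ
  have hpos := threshold_neg_one_pos hγ hv hρ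
  rw [aD_eq_scaledOverlap hM hγ hv hρ, ← scaledOverlap_zero hM hρ1 γ]
  exact strictMonoOn_scaledOverlap hM hP0 hγ hρ1 Set.self_mem_Ici hpos.le hpos

lemma aD_lt_bD (hM : ∀ᵐ x ∂P0, |x| ≤ M) (hP0 : ¬ ∀ᵐ x ∂P0, x = 0) (hγ : 0 < γ)
    (hv : 0 < v) (hρ : ρ ∈ Set.Ioo (0 : ℝ) (exp (-1))) : aD P0 γ ρ v < bD P0 γ ρ v := by
  have hρ1 := mem_Ioo_zero_one_of_lt_exp_neg_one hρ
  rw [aD_eq_scaledOverlap hM hγ hv hρ, bD_eq_scaledOverlap hM hγ hv hρ1]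
  exact strictMonoOn_scaledOverlap hM hP0 hγ hρ1 (threshold_neg_one_pos hγ hv hρ).le
    (threshold_one_pos hγ hv ρ).le (threshold_lt_threshold hγ hv.ne' hρ1 (by norm_num))

lemma eventually_bD_lt_aD (hM : ∀ᵐ x ∂P0, |x| ≤ M) (hP0 : ¬ ∀ᵐ x ∂P0, x = 0) (hγ : 0 < γ)
    (hv : 0 < v) {w : ℝ} (hvw : v < w) :
    ∀ᶠ ρ in nhdsWithin 0 (Set.Ioi 0), bD P0 γ ρ w < aD P0 γ ρ v := by
  filter_upwards [eventually_mem_Ioo_exp_neg_one,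
    eventually_threshold_lt_threshold hγ hv hvw 1 (-1)] with ρ hρ hlt
  have hρ1 := mem_Ioo_zero_one_of_lt_exp_neg_one hρ
  have hw := hv.trans hvw
  rw [aD_eq_scaledOverlap hM hγ hv hρ, bD_eq_scaledOverlap hM hγ hw hρ1]
  exact strictMonoOn_scaledOverlap hM hP0 hγ hρ1 (threshold_one_pos hγ hw ρ).le
    (threshold_neg_one_pos hγ hv hρ).le hlt

lemma bD_lt_secondMoment (hM : ∀ᵐ x ∂P0, |x| ≤ M) (hP0 : ¬ ∀ᵐ x ∂P0, x = 0) (hγ : 0 < γ)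
    (hv : 0 < v) (hρ : ρ ∈ Set.Ioo (0 : ℝ) 1) : bD P0 γ ρ v < secondMoment P0 := by
  rw [bD_eq_scaledOverlap hM hγ hv hρ]
  exact scaledOverlap_lt_secondMoment hM hP0 hγ hρ (threshold_one_pos hγ hv ρ).le

lemma maximizer_mem_Icc_threshold (hM : ∀ᵐ x ∂P0, |x| ≤ M) (hP0 : ¬ ∀ᵐ x ∂P0, x = 0)
    (hγ : 0 < γ) (hv : 0 < v) (hρ : ρ ∈ Set.Ioo (0 : ℝ) (exp (-1))) {q r : ℝ}
    (hq : q ∈ Set.Icc (aD P0 γ ρ v) (bD P0 γ ρ v)) (hr : 0 ≤ r)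
    (hmax : fD P0 γ ρ q r = ⨆ r' : Set.Ici (0 : ℝ), fD P0 γ ρ q (r' : ℝ)) :
    r ∈ Set.Icc (threshold γ (-1) v ρ) (threshold γ 1 v ρ) := by
  have hρ1 := mem_Ioo_zero_one_of_lt_exp_neg_one hρ
  rw [aD_eq_scaledOverlap hM hγ hv hρ, bD_eq_scaledOverlap hM hγ hv hρ1] at hq
  exact maximizer_mem_Icc hM hP0 hγ hρ1 (threshold_neg_one_pos hγ hv hρ)
    (threshold_lt_threshold hγ hv.ne' hρ1 (by norm_num)).le hq hr hmax

lemma fD_aD_threshold_eq_iSup (hM : ∀ᵐ x ∂P0, |x| ≤ M) (hP0 : ¬ ∀ᵐ x ∂P0, x = 0) (hγ : 0 < γ)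
    (hv : 0 < v) (hρ : ρ ∈ Set.Ioo (0 : ℝ) (exp (-1))) :
    fD P0 γ ρ (aD P0 γ ρ v) (threshold γ (-1) v ρ)
      = ⨆ r' : Set.Ici (0 : ℝ), fD P0 γ ρ (aD P0 γ ρ v) (r' : ℝ) := by
  have hpos := threshold_neg_one_pos hγ hv hρ
  rw [aD_eq_scaledOverlap hM hγ hv hρ]
  exact (fD_scaledOverlap_eq_iSup_iff hM hP0 hγ (mem_Ioo_zero_one_of_lt_exp_neg_one hρ)
    hpos hpos.le).2 rfl

lemma fD_bD_threshold_eq_iSup (hM : ∀ᵐ x ∂P0, |x| ≤ M) (hP0 : ¬ ∀ᵐ x ∂P0, x = 0) (hγ : 0 < γ)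
    (hv : 0 < v) (hρ : ρ ∈ Set.Ioo (0 : ℝ) 1) :
    fD P0 γ ρ (bD P0 γ ρ v) (threshold γ 1 v ρ)
      = ⨆ r' : Set.Ici (0 : ℝ), fD P0 γ ρ (bD P0 γ ρ v) (r' : ℝ) := by
  have hpos := threshold_one_pos hγ hv ρ
  rw [bD_eq_scaledOverlap hM hγ hv hρ]
  exact (fD_scaledOverlap_eq_iSup_iff hM hP0 hγ hρ hpos hpos.le).2 rfl

end Window

theorem location_of_maximizer_general {ι : Type*} [Finite ι] {γ : ℝ} (hγ : 0 < γ) {v : ι → ℝ}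
    (hv : ∀ j, 0 < v j) {P0 : Measure ℝ} [IsProbabilityMeasure P0] {M : ℝ}
    (hM : ∀ᵐ x ∂P0, |x| ≤ M) (hP0 : ¬ ∀ᵐ x ∂P0, x = 0) :
    (∃ ρ0 > (0 : ℝ), ∀ ρ : ℝ, 0 < ρ → ρ < ρ0 →
      (∀ j, ρ * meanP P0 ^ 2 < aD P0 γ ρ (v j)) ∧
      (∀ j, aD P0 γ ρ (v j) < bD P0 γ ρ (v j)) ∧
      (∀ j k, v j < v k → bD P0 γ ρ (v k) < aD P0 γ ρ (v j)) ∧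
      ∀ j, bD P0 γ ρ (v j) < secondMoment P0) ∧
    (∀ j,
      Filter.Tendsto (fun ρ => aD P0 γ ρ (v j)) (nhdsWithin 0 (Set.Ioi 0))
        (nhds (truncSMgt P0 (v j))) ∧
      Filter.Tendsto (fun ρ => bD P0 γ ρ (v j)) (nhdsWithin 0 (Set.Ioi 0))
        (nhds (truncSMge P0 (v j)))) ∧
    (∀ ρ ∈ Set.Ioo (0 : ℝ) 1, ∀ q ∈ Set.Ioo (ρ * meanP P0 ^ 2) (secondMoment P0),
      ∃! r : ℝ, 0 < r ∧ fD P0 γ ρ q r = ⨆ r' : Set.Ici (0 : ℝ), fD P0 γ ρ q (r' : ℝ)) ∧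
    (∀ ρ ∈ Set.Ioo (0 : ℝ) (exp (-1)), ∀ j,
      (∀ q ∈ Set.Icc (aD P0 γ ρ (v j)) (bD P0 γ ρ (v j)), ∀ r : ℝ, 0 < r →
        fD P0 γ ρ q r = (⨆ r' : Set.Ici (0 : ℝ), fD P0 γ ρ q (r' : ℝ)) →
        2 * (1 - |log ρ| ^ (-(1 : ℝ) / 4)) / (γ * v j ^ 2) ≤ r ∧
          r ≤ 2 * (1 + |log ρ| ^ (-(1 : ℝ) / 4)) / (γ * v j ^ 2)) ∧
      fD P0 γ ρ (aD P0 γ ρ (v j)) (2 * (1 - |log ρ| ^ (-(1 : ℝ) / 4)) / (γ * v j ^ 2))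
        = (⨆ r' : Set.Ici (0 : ℝ), fD P0 γ ρ (aD P0 γ ρ (v j)) (r' : ℝ)) ∧
      fD P0 γ ρ (bD P0 γ ρ (v j)) (2 * (1 + |log ρ| ^ (-(1 : ℝ) / 4)) / (γ * v j ^ 2))
        = (⨆ r' : Set.Ici (0 : ℝ), fD P0 γ ρ (bD P0 γ ρ (v j)) (r' : ℝ))) := by
  refine ⟨?_, fun j => ⟨tendsto_aD hM hγ (hv j), tendsto_bD hM hγ (hv j)⟩,
    fun ρ hρ q hq => existsUnique_maximizer hM hP0 hγ hρ hq, fun ρ hρ j => ?_⟩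
  · have hgap : ∀ᶠ ρ in nhdsWithin (0 : ℝ) (Set.Ioi 0), ∀ j k, v j < v k →
        bD P0 γ ρ (v k) < aD P0 γ ρ (v j) :=
      Filter.eventually_all.2 fun j => Filter.eventually_all.2 fun _ =>
        Filter.eventually_imp_distrib_left.2 fun hjk => eventually_bD_lt_aD hM hP0 hγ (hv j) hjk
    obtain ⟨ρ0, hρ0, hsub⟩ := mem_nhdsGT_iff_exists_Ioo_subset.1
      (eventually_mem_Ioo_exp_neg_one.and hgap)
    refine ⟨ρ0, hρ0, fun ρ hpos hlt => ?_⟩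
    obtain ⟨hρ, hgap⟩ := hsub ⟨hpos, hlt⟩
    exact ⟨fun j => mul_meanP_sq_lt_aD hM hP0 hγ (hv j) hρ,
      fun j => aD_lt_bD hM hP0 hγ (hv j) hρ, hgap,
      fun j => bD_lt_secondMoment hM hP0 hγ (hv j) (mem_Ioo_zero_one_of_lt_exp_neg_one hρ)⟩
  · rw [← threshold_neg_one, ← threshold_one]
    exact ⟨fun q hq r hr hmax => maximizer_mem_Icc_threshold hM hP0 hγ (hv j) hρ hq hr.le hmax,
      fD_aD_threshold_eq_iSup hM hP0 hγ (hv j) hρ,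
      fD_bD_threshold_eq_iSup hM hP0 hγ (hv j) (mem_Ioo_zero_one_of_lt_exp_neg_one hρ)⟩

lemma ae_abs_le_sum_of_ae_eq_or_eq_neg {ι : Type*} [Fintype ι] {v : ι → ℝ} {P : Measure ℝ}
    (h : ∀ᵐ x ∂P, ∃ k, x = v k ∨ x = -v k) : ∀ᵐ x ∂P, |x| ≤ ∑ k, |v k| := by
  filter_upwards [h] with x hx
  obtain ⟨k, hk⟩ := hx
  rw [abs_eq_abs.2 hk]
  exact Finset.single_le_sum (fun j _ => abs_nonneg (v j)) (Finset.mem_univ k)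

lemma not_ae_eq_zero_of_ae_eq_or_eq_neg {ι : Type*} {v : ι → ℝ} (hv : ∀ k, v k ≠ 0)
    {P : Measure ℝ} [NeZero P] (h : ∀ᵐ x ∂P, ∃ k, x = v k ∨ x = -v k) : ¬ ∀ᵐ x ∂P, x = 0 := by
  intro h0
  obtain ⟨x, ⟨k, hk⟩, rfl⟩ := (h.and h0).exists
  exact hv k (abs_eq_zero.1 (by rw [← abs_eq_abs.2 hk, abs_zero]))

/-- Lemma 7 of the paper: location of the maximizer of
r ↦ rq/2 − (1/α)ψ_ρ((α/ρ)r) for a discrete prior with finite support. -/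
theorem location_of_maximizer
    (γ : ℝ) (hγ : 0 < γ)
    (K : ℕ) (hK : 0 < K) (v : Fin K → ℝ) (hvpos : 0 < v ⟨0, hK⟩) (hvmono : StrictMono v)
    (P0 : Measure ℝ) [IsProbabilityMeasure P0]
    (hsupp : ∀ᵐ x ∂P0, ∃ k : Fin K, x = v k ∨ x = -(v k)) :
    -- (i) ordering of the a's and b's for ρ small enough
    (∃ ρ0 > (0 : ℝ), ∀ ρ : ℝ, 0 < ρ → ρ < ρ0 →
      (ρ * (meanP P0) ^ 2 < aD P0 γ ρ (v ⟨K - 1, by omega⟩)) ∧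
      (∀ j : Fin K, aD P0 γ ρ (v j) < bD P0 γ ρ (v j)) ∧
      (∀ j : Fin K, ∀ h : (j : ℕ) + 1 < K, bD P0 γ ρ (v ⟨(j : ℕ) + 1, h⟩) < aD P0 γ ρ (v j)) ∧
      (bD P0 γ ρ (v ⟨0, hK⟩) < secondMoment P0)) ∧
    -- (ii) limits of a and b as ρ → 0⁺
    (∀ j : Fin K,
      Filter.Tendsto (fun ρ => aD P0 γ ρ (v j)) (nhdsWithin 0 (Set.Ioi 0))
        (nhds (truncSMgt P0 (v j))) ∧
      Filter.Tendsto (fun ρ => bD P0 γ ρ (v j)) (nhdsWithin 0 (Set.Ioi 0))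
        (nhds (truncSMge P0 (v j)))) ∧
    -- (iii) existence and uniqueness of the maximizer
    (∀ ρ ∈ Set.Ioo (0 : ℝ) 1,
      ∀ q ∈ Set.Ioo (ρ * (meanP P0) ^ 2) (secondMoment P0),
        ∃! r : ℝ, 0 < r ∧
          fD P0 γ ρ q r = ⨆ r' : Set.Ici (0 : ℝ), fD P0 γ ρ q (r' : ℝ)) ∧
    -- (iv) location of the maximizer on [a_ρ^{(j)}, b_ρ^{(j)}]
    (∀ ρ ∈ Set.Ioo (0 : ℝ) (Real.exp (-1)), ∀ j : Fin K,
      (∀ q ∈ Set.Icc (aD P0 γ ρ (v j)) (bD P0 γ ρ (v j)),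
        ∀ r : ℝ, 0 < r →
          fD P0 γ ρ q r = (⨆ r' : Set.Ici (0 : ℝ), fD P0 γ ρ q (r' : ℝ)) →
          2 * (1 - |Real.log ρ| ^ (-(1 : ℝ) / 4)) / (γ * v j ^ 2) ≤ r ∧
            r ≤ 2 * (1 + |Real.log ρ| ^ (-(1 : ℝ) / 4)) / (γ * v j ^ 2)) ∧
      fD P0 γ ρ (aD P0 γ ρ (v j)) (2 * (1 - |Real.log ρ| ^ (-(1 : ℝ) / 4)) / (γ * v j ^ 2))
        = (⨆ r' : Set.Ici (0 : ℝ), fD P0 γ ρ (aD P0 γ ρ (v j)) (r' : ℝ)) ∧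
      fD P0 γ ρ (bD P0 γ ρ (v j)) (2 * (1 + |Real.log ρ| ^ (-(1 : ℝ) / 4)) / (γ * v j ^ 2))
        = (⨆ r' : Set.Ici (0 : ℝ), fD P0 γ ρ (bD P0 γ ρ (v j)) (r' : ℝ))) := by
  have hv (j : Fin K) : 0 < v j := hvpos.trans_le (hvmono.monotone (Nat.zero_le j))
  obtain ⟨⟨ρ0, hρ0, horder⟩, hlim_max_window⟩ := location_of_maximizer_general hγ hv
    (ae_abs_le_sum_of_ae_eq_or_eq_neg hsupp)
    (not_ae_eq_zero_of_ae_eq_or_eq_neg (fun k => (hv k).ne') hsupp)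
  refine ⟨⟨ρ0, hρ0, fun ρ hpos hlt => ?_⟩, hlim_max_window⟩
  obtain ⟨hmean, hab, hba, hmoment⟩ := horder ρ hpos hlt
  exact ⟨hmean _, hab, fun j h => hba _ _ (hvmono (Nat.lt_succ_self j)), hmoment _⟩

end DiscretePrior
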